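/- Every simple graph with minimum degree at least 5 contains a minor isomorphic to K_6^− (the complete graph on 6 vertices with one edge removed) or a minor isomorphic to the icosahedral graph. -/

import Mathlib

attribute [local instance] Classical.propDecidable

/-- `G` has an `H`-minor: pairwise disjoint nonempty branch sets indexed by the vertices of `H`,
each inducing a connected subgraph of `G`, with an edge of `G` between the branch sets of any
two vertices adjacent in `H`. -/
def SimpleGraph.HasMinor {V W : Type*} (G : SimpleGraph V) (H : SimpleGraph W) : Prop :=
  ∃ B : W → Set V,
    (∀ w, (B w).Nonempty) ∧
    (∀ w, (G.induce (B w)).Connected) ∧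
    (∀ w w', w ≠ w' → Disjoint (B w) (B w')) ∧
    (∀ w w', H.Adj w w' → ∃ u ∈ B w, ∃ v ∈ B w', G.Adj u v)

/-- The icosahedral graph: vertices `a`, `b i`, `c i` (`i : Fin 5`), `z`, with edges
`a bᵢ`, `bᵢ bᵢ₊₁`, `bᵢ cᵢ`, `bᵢ cᵢ₊₁`, `cᵢ cᵢ₊₁` (indices mod 5), and `z cᵢ`. -/
def Icosa : SimpleGraph (Unit ⊕ Fin 5 ⊕ Fin 5 ⊕ Unit) :=
  SimpleGraph.fromRel fun u v =>
    match u, v with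
    | Sum.inl _, Sum.inr (Sum.inl _) => True
    | Sum.inr (Sum.inl i), Sum.inr (Sum.inl j) => j = i + 1
    | Sum.inr (Sum.inl i), Sum.inr (Sum.inr (Sum.inl j)) => j = i ∨ j = i + 1
    | Sum.inr (Sum.inr (Sum.inl i)), Sum.inr (Sum.inr (Sum.inl j)) => j = i + 1
    | Sum.inr (Sum.inr (Sum.inr _)), Sum.inr (Sum.inr (Sum.inl _)) => True
    | _, _ => False

/-- `K₆⁻`: the complete graph on 6 vertices with one edge removed. -/
def K6minus : SimpleGraph (Fin 6) := (⊤ : SimpleGraph (Fin 6)).deleteEdges {s(0, 1)}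

namespace IcoMinor

/-- Elementary (cut) form of connectivity of an induced subgraph. -/
def Cn {V : Type*} (G : SimpleGraph V) (S : Set V) : Prop :=
  S.Nonempty ∧ ∀ T : Set V, (∃ a ∈ S, a ∈ T) →
    (∀ a ∈ S, ∀ b ∈ S, a ∈ T → G.Adj a b → b ∈ T) → ∀ b ∈ S, b ∈ T

theorem cn_iff {V : Type*} (G : SimpleGraph V) (S : Set V) :
    (G.induce S).Connected ↔ Cn G S := by
  constructor
  · intro h
    obtain ⟨⟨a0, ha0⟩⟩ := h.nonempty
    refine ⟨⟨a0, ha0⟩, ?_⟩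
    rintro T ⟨a, ha, haT⟩ hcl b hb
    obtain ⟨p⟩ := h.preconnected ⟨a, ha⟩ ⟨b, hb⟩
    have key : ∀ (x y : S) (_ : (G.induce S).Walk x y), x.1 ∈ T → y.1 ∈ T := by
      intro x y p
      induction p with
      | nil => exact id
      | cons h p ih => 
        intro hx
        exact ih (hcl _ (Subtype.prop _) _ (Subtype.prop _) hx h)
    exact key _ _ p haT
  · rintro ⟨⟨a0, ha0⟩, h⟩
    have : Nonempty S := ⟨⟨a0, ha0⟩⟩
    refine ⟨?_⟩
    rintro ⟨a, ha⟩ ⟨b, hb⟩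
    have := h {y | ∃ hy : y ∈ S, (G.induce S).Reachable ⟨a, ha⟩ ⟨y, hy⟩}
      ⟨a, ha, ha, SimpleGraph.Reachable.refl _⟩ ?_ b hb
    · exact this.2
    · rintro x hx y hy ⟨_, hr⟩ hxy
      refine ⟨hy, hr.trans (SimpleGraph.Adj.reachable ?_)⟩
      exact hxy

theorem cn_single {V : Type*} (G : SimpleGraph V) (a : V) : Cn G {a} := by
  refine ⟨⟨a, rfl⟩, ?_⟩
  rintro T ⟨x, hx, hxT⟩ _ b hb
  rw [Set.mem_singleton_iff] at hx hb
  subst hx; subst hb; exact hxT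

theorem cn_union {V : Type*} {G : SimpleGraph V} {S T : Set V} (hS : Cn G S) (hT : Cn G T)
    (h : ∃ a ∈ S, ∃ b ∈ T, G.Adj a b) : Cn G (S ∪ T) := by
  obtain ⟨a, ha, b, hb, hab⟩ := h
  refine ⟨⟨a, Or.inl ha⟩, ?_⟩
  rintro U ⟨x, hx, hxU⟩ hcl
  have h1 : (∃ y ∈ S, y ∈ U) → ∀ y ∈ S, y ∈ U := fun h => hS.2 U h
    (fun p hp q hq => hcl p (Or.inl hp) q (Or.inl hq))
  have h2 : (∃ y ∈ T, y ∈ U) → ∀ y ∈ T, y ∈ U := fun h => hT.2 U h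
    (fun p hp q hq => hcl p (Or.inr hp) q (Or.inr hq))
  have hab' := hcl a (Or.inl ha) b (Or.inr hb)
  have hba' := hcl b (Or.inr hb) a (Or.inl ha)
  have hb2 := hab.symm
  rcases hx with hx | hx
  · have hS' := h1 ⟨x, hx, hxU⟩
    have hT' := h2 ⟨b, hb, hab' (hS' a ha) hab⟩
    rintro y (hy | hy)
    · exact hS' y hy
    · exact hT' y hy
  · have hT' := h2 ⟨x, hx, hxU⟩
    have hS' := h1 ⟨a, ha, hba' (hT' b hb) hb2⟩
    rintro y (hy | hy)
    · exact hS' y hy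
    · exact hT' y hy

theorem cn_insert {V : Type*} {G : SimpleGraph V} {S : Set V} {a b : V} (hS : Cn G S)
    (hb : b ∈ S) (h : G.Adj a b) : Cn G (insert a S) := by
  have := cn_union (cn_single G a) hS ⟨a, rfl, b, hb, h⟩
  rwa [Set.singleton_union] at this

theorem cn_pair {V : Type*} {G : SimpleGraph V} {a b : V} (h : G.Adj a b) : Cn G {a, b} :=
  cn_insert (cn_single G b) rfl h

theorem cn_star {V : Type*} {G : SimpleGraph V} {S : Set V} {x : V} (hx : x ∈ S)
    (h : ∀ y ∈ S, y ≠ x → G.Adj x y) : Cn G S := by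
  refine ⟨⟨x, hx⟩, ?_⟩
  rintro T ⟨a, ha, haT⟩ hcl b hb
  have hxT : x ∈ T := by
    by_cases hax : a = x
    · exact hax ▸ haT
    · exact hcl a ha x hx haT (h a ha hax).symm
  by_cases hbx : b = x
  · exact hbx ▸ hxT
  · exact hcl x hx b hb hxT (h b hb hbx)

/-- The goal. -/
def M {V : Type*} (G : SimpleGraph V) : Prop := G.HasMinor K6minus ∨ G.HasMinor Icosa

theorem transferH {V W : Type*} {G' G : SimpleGraph V} {H : SimpleGraph W}
    (hH : ∀ w, ∃ w', H.Adj w w') (B : V → Set V)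
    (h1 : ∀ v y, G'.Adj v y → Cn G (B v))
    (h2 : ∀ v y v' y', G'.Adj v y → G'.Adj v' y' → v ≠ v' → Disjoint (B v) (B v'))
    (h3 : ∀ v v', G'.Adj v v' → ∃ a ∈ B v, ∃ b ∈ B v', G.Adj a b)
    (hM : G'.HasMinor H) : G.HasMinor H := by
  obtain ⟨C, hne, hcn, hdis, hadj⟩ := hM
  simp only [cn_iff] at hcn
  have hni : ∀ w, ∀ v ∈ C w, ∃ y, G'.Adj v y := by
    intro w v hv
    by_contra hcon
    push Not at hcon
    have hs := (hcn w).2 {v} ⟨v, hv, rfl⟩ (by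
      rintro a ha b hb hav hab
      rw [Set.mem_singleton_iff] at hav
      subst hav
      exact absurd hab (hcon b))
    obtain ⟨w', hw'⟩ := hH w
    obtain ⟨p, hp, q, hq, hpq⟩ := hadj w w' hw'
    have : p = v := hs p hp
    subst this
    exact hcon q hpq
  refine ⟨fun w => ⋃ v ∈ C w, B v, ?_, ?_, ?_, ?_⟩
  · intro w
    obtain ⟨v, hv⟩ := hne w
    obtain ⟨y, hy⟩ := hni w v hv
    obtain ⟨p, hp⟩ := (h1 v y hy).1
    exact ⟨p, Set.mem_biUnion hv hp⟩
  · intro w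
    rw [cn_iff]
    constructor
    · obtain ⟨v, hv⟩ := hne w
      obtain ⟨y, hy⟩ := hni w v hv
      obtain ⟨p, hp⟩ := (h1 v y hy).1
      exact ⟨p, Set.mem_biUnion hv hp⟩
    · rintro T ⟨a, ha, haT⟩ hcl
      have hfill : ∀ v ∈ C w, (∃ p ∈ B v, p ∈ T) → ∀ p ∈ B v, p ∈ T := by
        intro v hv hp
        obtain ⟨y, hy⟩ := hni w v hv
        exact (h1 v y hy).2 T hp (fun p hp q hq => 
          hcl p (Set.mem_biUnion hv hp) q (Set.mem_biUnion hv hq))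
      have := (hcn w).2 {v | ∀ p ∈ B v, p ∈ T} ?_ ?_
      · intro b hb
        simp only [Set.mem_iUnion] at hb
        obtain ⟨v, hv, hb⟩ := hb
        exact this v hv b hb
      · simp only [Set.mem_iUnion] at ha
        obtain ⟨v, hv, ha⟩ := ha
        exact ⟨v, hv, hfill v hv ⟨a, ha, haT⟩⟩
      · intro v hv v' hv' hvT hvv'
        obtain ⟨p, hp, q, hq, hpq⟩ := h3 v v' hvv'
        exact hfill v' hv' ⟨q, hq, hcl p (Set.mem_biUnion hv hp) q (Set.mem_biUnion hv' hq)
          (hvT p hp) hpq⟩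
  · intro w w' hww'
    rw [Set.disjoint_left]
    intro p hp hp'
    simp only [Set.mem_iUnion] at hp hp'
    obtain ⟨v, hv, hp⟩ := hp
    obtain ⟨v', hv', hp'⟩ := hp'
    obtain ⟨y, hy⟩ := hni w v hv
    obtain ⟨y', hy'⟩ := hni w' v' hv'
    have hne : v ≠ v' := by
      rintro rfl
      exact Set.disjoint_left.mp (hdis w w' hww') hv hv'
    exact Set.disjoint_left.mp (h2 v y v' y' hy hy' hne) hp hp'
  · intro w w' hww'
    obtain ⟨v, hv, v', hv', hvv'⟩ := hadj w w' hww'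
    obtain ⟨p, hp, q, hq, hpq⟩ := h3 v v' hvv'
    exact ⟨p, Set.mem_biUnion hv hp, q, Set.mem_biUnion hv' hq, hpq⟩

theorem k6_noiso : ∀ w, ∃ w', K6minus.Adj w w' := by
  intro w
  fin_cases w
  · exact ⟨2, by simp [K6minus]⟩
  · exact ⟨2, by simp [K6minus]⟩
  · exact ⟨3, by simp [K6minus]⟩
  · exact ⟨2, by simp [K6minus]⟩
  · exact ⟨2, by simp [K6minus]⟩
  · exact ⟨2, by simp [K6minus]⟩

theorem ico_noiso : ∀ w, ∃ w', Icosa.Adj w w' := by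
  rintro (w | w | w | w)
  · exact ⟨Sum.inr (Sum.inl 0), by simp [Icosa]⟩
  · exact ⟨Sum.inl (), by simp [Icosa]⟩
  · exact ⟨Sum.inr (Sum.inr (Sum.inr ())), by simp [Icosa]⟩
  · exact ⟨Sum.inr (Sum.inr (Sum.inl 0)), by simp [Icosa]⟩

theorem transfer {V : Type*} {G' G : SimpleGraph V} (B : V → Set V)
    (h1 : ∀ v y, G'.Adj v y → Cn G (B v))
    (h2 : ∀ v y v' y', G'.Adj v y → G'.Adj v' y' → v ≠ v' → Disjoint (B v) (B v'))
    (h3 : ∀ v v', G'.Adj v v' → ∃ a ∈ B v, ∃ b ∈ B v', G.Adj a b)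
    (hM : M G') : M G := by
  rcases hM with h | h
  · exact Or.inl (transferH k6_noiso B h1 h2 h3 h)
  · exact Or.inr (transferH ico_noiso B h1 h2 h3 h)

theorem M_mono {V : Type*} {G' G : SimpleGraph V} (h : G' ≤ G) (hM : M G') : M G := by
  refine transfer (fun v => {v}) (fun v _ _ => cn_single G v) ?_ ?_ hM
  · intro v _ v' _ _ _ hne
    simpa using hne
  · intro v v' hvv'
    exact ⟨v, rfl, v', rfl, h hvv'⟩

def E {V : Type*} (G : SimpleGraph V) (S T : Set V) : Prop := ∃ a ∈ S, ∃ b ∈ T, G.Adj a b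

theorem E.symm {V : Type*} {G : SimpleGraph V} {S T : Set V} (h : E G S T) : E G T S := by
  obtain ⟨a, ha, b, hb, hab⟩ := h
  exact ⟨b, hb, a, ha, hab.symm⟩

theorem k6_of {V : Type*} {G : SimpleGraph V} {A B C D F H : Set V}
    (cA : Cn G A) (cB : Cn G B) (cC : Cn G C) (cD : Cn G D) (cF : Cn G F) (cH : Cn G H)
    (dAB : Disjoint A B) (dAC : Disjoint A C) (dAD : Disjoint A D) (dAF : Disjoint A F)
    (dAH : Disjoint A H) (dBC : Disjoint B C) (dBD : Disjoint B D) (dBF : Disjoint B F)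
    (dBH : Disjoint B H) (dCD : Disjoint C D) (dCF : Disjoint C F) (dCH : Disjoint C H)
    (dDF : Disjoint D F) (dDH : Disjoint D H) (dFH : Disjoint F H)
    (eAC : E G A C) (eAD : E G A D) (eAF : E G A F)
    (eAH : E G A H) (eBC : E G B C) (eBD : E G B D) (eBF : E G B F)
    (eBH : E G B H) (eCD : E G C D) (eCF : E G C F) (eCH : E G C H)
    (eDF : E G D F) (eDH : E G D H) (eFH : E G F H) : M G := by
  left
  refine ⟨![A, B, C, D, F, H], ?_, ?_, ?_, ?_⟩
  · intro w
    fin_cases w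
    exacts [cA.1, cB.1, cC.1, cD.1, cF.1, cH.1]
  · intro w
    rw [cn_iff]
    fin_cases w
    exacts [cA, cB, cC, cD, cF, cH]
  · intro w w'
    fin_cases w <;> fin_cases w' <;> intro h <;>
      first
        | exact absurd rfl h
        | assumption
        | (apply Disjoint.symm; assumption)
  · intro w w'
    fin_cases w <;> fin_cases w' <;> intro h <;>
      first
        | assumption
        | (apply E.symm; assumption)
        | (exfalso; revert h; simp [K6minus]; done)

theorem ico_of {V : Type*} {G : SimpleGraph V} (a z : V) (b c : Fin 5 → V)
    (hb : Function.Injective b) (hc : Function.Injective c)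
    (hab : ∀ i, G.Adj a (b i)) (hbb : ∀ i, G.Adj (b i) (b (i + 1)))
    (hbc : ∀ i, G.Adj (b i) (c i)) (hbc' : ∀ i, G.Adj (b i) (c (i + 1)))
    (hcc : ∀ i, G.Adj (c i) (c (i + 1))) (hzc : ∀ i, G.Adj z (c i))
    (hac : ∀ i, a ≠ c i) (haz : a ≠ z) (hne : ∀ i j, b i ≠ c j) (hbz : ∀ i, b i ≠ z) : M G := by
  right
  have h1 : ∀ i, a ≠ b i := fun i => (hab i).ne
  have h2 : ∀ i, z ≠ c i := fun i => (hzc i).ne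
  refine ⟨fun w => match w with
    | Sum.inl _ => {a}
    | Sum.inr (Sum.inl i) => {b i}
    | Sum.inr (Sum.inr (Sum.inl i)) => {c i}
    | Sum.inr (Sum.inr (Sum.inr _)) => {z}, ?_, ?_, ?_, ?_⟩
  · rintro (w | w | w | w) <;> simp
  · rintro (w | w | w | w) <;> rw [cn_iff] <;> apply cn_single
  · rintro (w | w | w | w) (w' | w' | w' | w') <;> simp [hb.eq_iff, hc.eq_iff] <;> grind
  · rintro (w | w | w | w) (w' | w' | w' | w') <;> simp [Icosa] <;>
      grind [SimpleGraph.Adj.symm, SimpleGraph.adj_comm]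

end IcoMinor

namespace IcoMinor

open Finset

variable {V : Type*} [Fintype V]

noncomputable def nb (G : SimpleGraph V) (v : V) : Finset V := univ.filter (fun y => G.Adj v y)

noncomputable def dg (G : SimpleGraph V) (v : V) : ℕ := (nb G v).card

noncomputable def supp (G : SimpleGraph V) : Finset V := univ.filter (fun v => ∃ w, G.Adj v w)

theorem mem_nb {G : SimpleGraph V} {v y : V} : y ∈ nb G v ↔ G.Adj v y := by simp [nb]

theorem mem_supp {G : SimpleGraph V} {v : V} : v ∈ supp G ↔ ∃ w, G.Adj v w := by simp [supp]

theorem dg_pos {G : SimpleGraph V} {v : V} (h : 0 < dg G v) : ∃ w, G.Adj v w := by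
  obtain ⟨w, hw⟩ := Finset.card_pos.mp h
  exact ⟨w, mem_nb.mp hw⟩

/-- a vertex of degree larger than `S.card` has a neighbour outside `S` -/
theorem ex_out {G : SimpleGraph V} {v : V} (S : Finset V) (h : S.card < dg G v) :
    ∃ w, G.Adj v w ∧ w ∉ S := by
  obtain ⟨w, hw, hwS⟩ := Finset.exists_mem_notMem_of_card_lt_card h
  exact ⟨w, mem_nb.mp hw, hwS⟩

/-- if the neighbours of `v` are all in `S` and `dg v ≥ S.card` all of `S` are neighbours -/
theorem all_in {G : SimpleGraph V} {v : V} (S : Finset V) (h : S.card ≤ dg G v)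
    (hS : ∀ w, G.Adj v w → w ∈ S) : ∀ w ∈ S, G.Adj v w := by
  have : nb G v = S := Finset.eq_of_subset_of_card_le (fun w hw => hS w (mem_nb.mp hw)) h
  intro w hw
  rw [← this] at hw
  exact mem_nb.mp hw

/-- if all of `S` are neighbours and `dg v ≤ S.card` then all neighbours are in `S` -/
theorem all_of {G : SimpleGraph V} {v : V} (S : Finset V) (h : dg G v ≤ S.card)
    (hS : ∀ w ∈ S, G.Adj v w) : ∀ w, G.Adj v w → w ∈ S := by
  have : S = nb G v := Finset.eq_of_subset_of_card_le (fun w hw => mem_nb.mpr (hS w hw)) h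
  intro w hw
  rw [this]
  exact mem_nb.mpr hw

theorem le_dg {G : SimpleGraph V} {v : V} (S : Finset V) 
    (hS : ∀ w ∈ S, G.Adj v w) : S.card ≤ dg G v :=
  Finset.card_le_card (fun w hw => mem_nb.mpr (hS w hw))

theorem dg_le {G : SimpleGraph V} {v : V} (S : Finset V) 
    (hS : ∀ w, G.Adj v w → w ∈ S) : dg G v ≤ S.card :=
  Finset.card_le_card (fun w hw => hS w (mem_nb.mp hw))

def Clq (G : SimpleGraph V) (K : Finset V) : Prop :=
  K.card ≤ 3 ∧ ∀ a ∈ K, ∀ b ∈ K, a ≠ b → G.Adj a b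

structure Ring (G : SimpleGraph V) (x t1 t2 t3 t4 : V) : Prop where
  hx : ∀ y, G.Adj x y ↔ y = t1 ∨ y = t2 ∨ y = t3 ∨ y = t4
  h13 : t1 ≠ t3
  h24 : t2 ≠ t4
  h12 : G.Adj t1 t2
  h23 : G.Adj t2 t3
  h34 : G.Adj t3 t4
  h41 : G.Adj t4 t1

def Typ (G : SimpleGraph V) (K : Finset V) : Prop :=
  Clq G K ∨ ∃ x t1 t2 t3 t4, K = {x, t1, t2, t3, t4} ∧ Ring G x t1 t2 t3 t4

def Rep (G : SimpleGraph V) (K : Finset V) : Prop :=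
  (∀ v, v ∉ K → ∀ w, G.Adj v w → 5 ≤ dg G v) ∧ ∃ v, v ∉ K ∧ ∃ w, G.Adj v w

def InC (G : SimpleGraph V) : Prop := ∃ K, Typ G K ∧ Rep G K

def IH1 (G : SimpleGraph V) : Prop :=
  ∀ G' : SimpleGraph V, (supp G').card < (supp G).card → InC G' → M G'

structure Mn (G : SimpleGraph V) : Prop where
  nM : ¬ M G
  ih1 : IH1 G
  ih2 : ∀ G' : SimpleGraph V, G' < G → InC G' → M G'

theorem induct (h : ∀ G : SimpleGraph V, InC G → ¬ Mn G) : ∀ G : SimpleGraph V, InC G → M G := by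
  have key : ∀ n, ∀ G : SimpleGraph V, (supp G).card ≤ n → InC G → M G := by
    intro n
    induction n using Nat.strong_induction_on with
    | _ n ih =>
      intro G
      induction G using WellFoundedLT.induction with
      | _ G ihG =>
        intro hn hC
        by_contra hM
        refine h G hC ⟨hM, ?_, ?_⟩
        · intro G' h1 h2
          exact ih _ (lt_of_lt_of_le h1 hn) G' le_rfl h2
        · intro G' h1 h2
          refine ihG G' h1 (le_trans (Finset.card_le_card ?_) hn) h2
          intro v hv
          rw [mem_supp] at *
          obtain ⟨w, hw⟩ := hv
          exact ⟨w, h1.le hw⟩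
  intro G
  exact key _ G le_rfl

theorem supp_lt {G G' : SimpleGraph V} (y z : V) (hy : G.Adj y z) (hy' : ∀ z, ¬ G'.Adj y z)
    (h : ∀ v w, G'.Adj v w → ∃ w, G.Adj v w) : (supp G').card < (supp G).card := by
  apply Finset.card_lt_card
  rw [Finset.ssubset_iff_of_subset]
  · refine ⟨y, mem_supp.mpr ⟨z, hy⟩, ?_⟩
    rw [mem_supp]
    rintro ⟨w, hw⟩
    exact hy' w hw
  · intro v hv
    rw [mem_supp] at *
    obtain ⟨w, hw⟩ := hv
    exact h v w hw

set_option maxHeartbeats 1000000 in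
/-- closing lemma, three vertices -/
theorem cl3 {G : SimpleGraph V} (ih : IH1 G) (F D : Set V) (p1 p2 p3 : V) (hF : Cn G F)
    (hD5 : ∀ v ∈ D, ∀ w, G.Adj v w → 5 ≤ dg G v)
    (hD : ∃ v ∈ D, ∃ w, G.Adj v w)
    (hDP : ∀ v ∈ D, ∀ w, G.Adj v w → w ∈ D ∨ w = p1 ∨ w = p2 ∨ w = p3)
    (hDF : ∀ v ∈ D, v ∉ F)
    (h1F : p1 ∉ F) (h2F : p2 ∉ F) (h3F : p3 ∉ F) (h1D : p1 ∉ D) (h2D : p2 ∉ D) (h3D : p3 ∉ D)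
    (e1 : ∃ f ∈ F, G.Adj f p1) (e2 : ∃ f ∈ F, G.Adj f p2) (e3 : ∃ f ∈ F, G.Adj f p3)
    (e23 : p2 = p3 ∨ G.Adj p2 p3) : M G := by
  let P : Finset V := {p1, p2, p3}
  have hP : ∀ v, v ∈ P ↔ v = p1 ∨ v = p2 ∨ v = p3 := by simp [P]
  let G' : SimpleGraph V :=
    { Adj := fun a b => a ≠ b ∧ (a ∈ D ∨ a ∈ P) ∧ (b ∈ D ∨ b ∈ P) ∧ (G.Adj a b ∨ (a ∈ P ∧ b ∈ P))
      symm := ⟨fun a b ⟨h1, h2, h3, h4⟩ => ⟨h1.symm, h3, h2, h4.imp (fun h => h.symm) And.symm⟩⟩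
      loopless := ⟨fun a h => h.1 rfl⟩ }
  have hA : ∀ a b, G'.Adj a b ↔ a ≠ b ∧ (a ∈ D ∨ a ∈ P) ∧ (b ∈ D ∨ b ∈ P) ∧
    (G.Adj a b ∨ (a ∈ P ∧ b ∈ P)) := fun a b => Iff.rfl
  have hDadj : ∀ v ∈ D, ∀ w, G'.Adj v w ↔ G.Adj v w := by
    intro v hv w
    have := hDP v hv w
    have hvP : v ∉ P := by rw [hP]; rintro (h | h | h) <;> simp_all
    rw [hA]
    constructor
    · rintro ⟨h1, h2, h3, h4⟩
      tauto
    · intro h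
      refine ⟨h.ne, Or.inl hv, ?_, Or.inl h⟩
      rw [hP]
      exact this h
  have hdg : ∀ v ∈ D, dg G' v = dg G v := by
    intro v hv
    unfold dg nb
    congr 1
    ext w
    simp [hDadj v hv]
  have hC : InC G' := by
    refine ⟨P, Or.inl ⟨Finset.card_le_three, ?_⟩, ?_, ?_⟩
    · intro a ha b hb hab
      exact ⟨hab, Or.inr ha, Or.inr hb, Or.inr ⟨ha, hb⟩⟩
    · intro v hv w hvw
      have hvD : v ∈ D := by rcases hvw.2.1 with h | h; exacts [h, absurd h hv]
      rw [hdg v hvD]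
      exact hD5 v hvD w ((hDadj v hvD w).mp hvw)
    · obtain ⟨v, hv, w, hw⟩ := hD
      refine ⟨v, ?_, w, (hDadj v hv w).mpr hw⟩
      rw [hP]; rintro (h | h | h) <;> simp_all
  obtain ⟨f, hfF, hf⟩ := e1
  have hFn : ∀ f ∈ F, f ∉ D ∧ f ∉ P := by
    intro f hf
    refine ⟨fun h => hDF f h hf, ?_⟩
    rw [hP]; rintro (h | h | h) <;> simp_all
  have hsupp : (supp G').card < (supp G).card := by
    refine supp_lt f p1 hf ?_ ?_
    · intro z hz
      have := hFn f hfF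
      rcases hz.2.1 with h | h <;> tauto
    · rintro v w ⟨h1, h2, h3, h4 | h4⟩
      · exact ⟨w, h4⟩
      · have := (hP v).mp h4.1
        obtain ⟨f2, _, e2⟩ := e2
        obtain ⟨f3, _, e3⟩ := e3
        rcases this with rfl | rfl | rfl
        · exact ⟨f, hf.symm⟩
        · exact ⟨f2, e2.symm⟩
        · exact ⟨f3, e3.symm⟩
  refine transfer (G' := G') (fun v => if v = p1 then insert p1 F else {v}) ?_ ?_ ?_ (ih G' hsupp hC)
  · intro v y _
    try dsimp only
    split_ifs
    · exact cn_insert hF hfF hf.symm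
    · exact cn_single G v
  · intro v y v' y' hv hv' hne
    have h1 : v ∉ F := fun h => hv.2.1.elim (hFn v h).1 (hFn v h).2
    have h2 : v' ∉ F := fun h => hv'.2.1.elim (hFn v' h).1 (hFn v' h).2
    try dsimp only
    rw [Set.disjoint_left]
    split_ifs <;> simp only [Set.mem_insert_iff, Set.mem_singleton_iff] <;> grind
  · rintro v v' ⟨h1, h2, h3, h4⟩
    have hin : ∀ v, v ∈ (if v = p1 then insert p1 F else {v} : Set V) := by
      intro v; split_ifs with h
      · left; exact h
      · rfl
    try dsimp only
    by_cases hadj : G.Adj v v'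
    · exact ⟨v, hin v, v', hin v', hadj⟩
    · have h5 : v ∈ P ∧ v' ∈ P := by tauto
      rw [hP, hP] at h5
      have hFin : ∀ f ∈ F, f ∈ (if p1 = p1 then insert p1 F else {p1} : Set V) := by
        intro f hf; rw [if_pos rfl]; right; exact hf
      have e32 : p2 = p3 ∨ G.Adj p3 p2 := e23.imp id fun h => h.symm
      obtain ⟨f2, hf2, e2⟩ := e2
      obtain ⟨f3, hf3, e3⟩ := e3
      rcases h5 with ⟨rfl | rfl | rfl, rfl | rfl | rfl⟩ <;> first
        | exact absurd rfl h1
        | exact ⟨f2, hFin _ hf2, _, hin _, e2⟩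
        | exact ⟨f3, hFin _ hf3, _, hin _, e3⟩
        | exact ⟨_, hin _, f2, hFin _ hf2, e2.symm⟩
        | exact ⟨_, hin _, f3, hFin _ hf3, e3.symm⟩
        | (exfalso; tauto)

set_option maxHeartbeats 1000000 in
/-- closing lemma, four vertices -/
theorem cl4 {G : SimpleGraph V} (ih : IH1 G) (F D : Set V) (p1 p2 p3 p4 x y : V) (hF : Cn G F)
    (hx : x ∈ F) (hy : y ∈ F) (hxy : x ≠ y)
    (hD5 : ∀ v ∈ D, ∀ w, G.Adj v w → 5 ≤ dg G v)
    (hD : ∃ v ∈ D, ∃ w, G.Adj v w)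
    (hDP : ∀ v ∈ D, ∀ w, G.Adj v w → w ∈ D ∨ w = p1 ∨ w = p2 ∨ w = p3 ∨ w = p4)
    (hDF : ∀ v ∈ D, v ∉ F)
    (hPF : ∀ v, v = p1 ∨ v = p2 ∨ v = p3 ∨ v = p4 → v ∉ F ∧ v ∉ D ∧ ∃ f ∈ F, G.Adj f v)
    (h13 : p1 ≠ p3) (h24 : p2 ≠ p4) (h12 : G.Adj p1 p2) (h23 : G.Adj p2 p3) (h34 : G.Adj p3 p4)
    (h41 : G.Adj p4 p1) : M G := by
  let P : Finset V := {p1, p2, p3, p4}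
  have hP : ∀ v, v ∈ P ↔ v = p1 ∨ v = p2 ∨ v = p3 ∨ v = p4 := by simp [P]
  simp only [← hP] at hPF hDP
  have hxP : x ∉ P := fun h => (hPF x h).1 hx
  have hyP : y ∉ P := fun h => (hPF y h).1 hy
  have hxD : x ∉ D := fun h => hDF x h hx
  have hyD : y ∉ D := fun h => hDF y h hy
  let G' : SimpleGraph V :=
    { Adj := fun a b => ((a ∈ D ∨ a ∈ P) ∧ (b ∈ D ∨ b ∈ P) ∧ G.Adj a b) ∨ (a = x ∧ b ∈ P) ∨
        (b = x ∧ a ∈ P)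
      symm := ⟨fun a b h => by
        rcases h with h | h | h
        · exact Or.inl ⟨h.2.1, h.1, h.2.2.symm⟩
        · exact Or.inr (Or.inr h)
        · exact Or.inr (Or.inl h)⟩
      loopless := ⟨fun a h => by
        rcases h with h | ⟨rfl, h⟩ | ⟨rfl, h⟩
        · exact h.2.2.ne rfl
        · exact hxP h
        · exact hxP h⟩ }
  have hA : ∀ a b, G'.Adj a b ↔ ((a ∈ D ∨ a ∈ P) ∧ (b ∈ D ∨ b ∈ P) ∧ G.Adj a b) ∨ 
    (a = x ∧ b ∈ P) ∨ (b = x ∧ a ∈ P) := fun a b => Iff.rfl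
  have hDnP : ∀ v ∈ D, v ∉ P := fun v h h' => (hPF v h').2.1 h
  have hDadj : ∀ v ∈ D, ∀ w, G'.Adj v w ↔ G.Adj v w := by
    intro v hv w
    have h1 := hDP v hv w
    have h2 := hDnP v hv
    have h3 : v ≠ x := fun h => hxD (h ▸ hv)
    rw [hA]
    tauto
  have hdg : ∀ v ∈ D, dg G' v = dg G v := by
    intro v hv
    unfold dg nb
    congr 1
    ext w
    simp [hDadj v hv]
  have m1 : p1 ∈ P := by simp [P]
  have m2 : p2 ∈ P := by simp [P]
  have m3 : p3 ∈ P := by simp [P]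
  have m4 : p4 ∈ P := by simp [P]
  have hC : InC G' := by
    refine ⟨insert x P, Or.inr ⟨x, p1, p2, p3, p4, rfl, ?_, h13, h24, ?_, ?_, ?_, ?_⟩, ?_, ?_⟩
    · intro z
      rw [← hP, hA]
      constructor
      · rintro (h | h | h) <;> tauto
      · intro h; right; left; exact ⟨rfl, h⟩
    · left; exact ⟨Or.inr m1, Or.inr m2, h12⟩
    · left; exact ⟨Or.inr m2, Or.inr m3, h23⟩
    · left; exact ⟨Or.inr m3, Or.inr m4, h34⟩
    · left; exact ⟨Or.inr m4, Or.inr m1, h41⟩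
    · intro v hv w hvw
      rw [Finset.mem_insert] at hv
      have hvD : v ∈ D := by rw [hA] at hvw; tauto
      rw [hdg v hvD]
      exact hD5 v hvD w ((hDadj v hvD w).mp hvw)
    · obtain ⟨v, hv, w, hw⟩ := hD
      refine ⟨v, ?_, w, (hDadj v hv w).mpr hw⟩
      rw [Finset.mem_insert]
      have h2 := hDnP v hv
      have h3 : v ≠ x := fun h => hxD (h ▸ hv)
      tauto
  have hyn : ∃ z ∈ F, G.Adj y z := by
    by_contra hcon
    push Not at hcon
    have := hF.2 {y} ⟨y, hy, rfl⟩ (by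
      rintro a ha b hb hay hab
      rw [Set.mem_singleton_iff] at hay
      subst hay
      exact absurd hab (hcon b hb)) x hx
    exact hxy this
  have hxn : ∃ z ∈ F, G.Adj x z := by
    by_contra hcon
    push Not at hcon
    have := hF.2 {x} ⟨x, hx, rfl⟩ (by
      rintro a ha b hb hay hab
      rw [Set.mem_singleton_iff] at hay
      subst hay
      exact absurd hab (hcon b hb)) y hy
    exact hxy this.symm
  have hsupp : (supp G').card < (supp G).card := by
    obtain ⟨z, _, hz⟩ := hyn
    refine supp_lt y z hz ?_ ?_
    · intro z hz
      rw [hA] at hz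
      have : y ≠ x := hxy.symm
      tauto
    · rintro v w (h | ⟨rfl, h⟩ | ⟨rfl, h⟩)
      · exact ⟨w, h.2.2⟩
      · obtain ⟨z, _, hz⟩ := hxn
        exact ⟨z, hz⟩
      · obtain ⟨f, _, hf⟩ := (hPF v h).2.2
        exact ⟨f, hf.symm⟩
  have hmem : ∀ v w, G'.Adj v w → v = x ∨ v ∉ F := by
    rintro v w (⟨h | h, _⟩ | ⟨h, _⟩ | ⟨_, h⟩)
    · exact Or.inr (hDF v h)
    · exact Or.inr (hPF v h).1
    · exact Or.inl h
    · exact Or.inr (hPF v h).1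
  refine transfer (G' := G') (fun v => if v = x then F else {v}) ?_ ?_ ?_ (ih G' hsupp hC)
  · intro v y _
    try dsimp only
    split_ifs
    · exact hF
    · exact cn_single G v
  · intro v y v' y' hv hv' hne
    have h1 : v = x ∨ v ∉ F := hmem v y hv
    have h2 : v' = x ∨ v' ∉ F := hmem v' y' hv'
    try dsimp only
    rw [Set.disjoint_left]
    split_ifs <;> (try simp only [Set.mem_singleton_iff]) <;> grind
  · intro v v' hvv'
    have hin : ∀ v, v ∈ (if v = x then F else {v} : Set V) := by
      intro v; split_ifs with h
      · exact h ▸ hx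
      · rfl
    have hFin : ∀ f ∈ F, f ∈ (if x = x then F else {x} : Set V) := by
        intro f hf; rw [if_pos rfl]; exact hf
    try dsimp only
    rcases hvv' with h | ⟨rfl, h⟩ | ⟨rfl, h⟩
    · exact ⟨v, hin v, v', hin v', h.2.2⟩
    · obtain ⟨f, hf, hfa⟩ := (hPF v' h).2.2
      exact ⟨f, hFin f hf, v', hin v', hfa⟩
    · obtain ⟨f, hf, hfa⟩ := (hPF v h).2.2
      exact ⟨v, hin v, f, hFin f hf, hfa.symm⟩

end IcoMinor

namespace IcoMinor

set_option linter.unusedSectionVars false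

open Finset

variable {V : Type*} [Fintype V]

/-- contraction of `uw` into `u` -/
def ctr (G : SimpleGraph V) (u w : V) : SimpleGraph V where
  Adj a b := a ≠ b ∧ a ≠ w ∧ b ≠ w ∧ (G.Adj a b ∨ (a = u ∧ G.Adj w b) ∨ (b = u ∧ G.Adj w a))
  symm := ⟨fun a b h => ⟨h.1.symm, h.2.2.1, h.2.1, by
    rcases h.2.2.2 with h | h | h
    · exact Or.inl h.symm
    · exact Or.inr (Or.inr h)
    · exact Or.inr (Or.inl h)⟩⟩
  loopless := ⟨fun a h => h.1 rfl⟩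

theorem ctr_adj {G : SimpleGraph V} {u w a b : V} : (ctr G u w).Adj a b ↔ a ≠ b ∧ a ≠ w ∧ b ≠ w ∧
    (G.Adj a b ∨ (a = u ∧ G.Adj w b) ∨ (b = u ∧ G.Adj w a)) := Iff.rfl

theorem ctr_M {G : SimpleGraph V} {u w : V} (h : G.Adj u w) (hM : M (ctr G u w)) : M G := by
  refine transfer (G' := ctr G u w) (fun v => if v = u then {u, w} else {v}) ?_ ?_ ?_ hM
  · intro v y _
    split_ifs
    · exact cn_pair h
    · exact cn_single G v
  · intro v y v' y' hv hv' hne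
    have h1 := hv.2.1
    have h2 := hv'.2.1
    rw [Set.disjoint_left]
    split_ifs <;> simp only [Set.mem_insert_iff, Set.mem_singleton_iff] <;> grind
  · rintro v v' ⟨h1, h2, h3, h4⟩
    have hin : ∀ v, v ∈ (if v = u then {u, w} else {v} : Set V) := by
      intro v; split_ifs with h
      · left; exact h
      · rfl
    have hw : w ∈ (if u = u then {u, w} else {u} : Set V) := by
      rw [if_pos rfl]; right; rfl
    rcases h4 with h4 | ⟨rfl, h4⟩ | ⟨rfl, h4⟩
    · exact ⟨v, hin v, v', hin v', h4⟩
    · exact ⟨w, hw, v', hin v', h4⟩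
    · exact ⟨v, hin v, w, hw, h4.symm⟩

theorem ctr_supp {G : SimpleGraph V} {u w : V} (h : G.Adj u w) :
    (supp (ctr G u w)).card < (supp G).card := by
  refine supp_lt w u h.symm (fun z hz => hz.2.1 rfl) ?_
  rintro v y ⟨_, _, _, h1 | h1 | h1⟩
  · exact ⟨y, h1⟩
  · exact ⟨w, h1.1 ▸ h⟩
  · exact ⟨w, h1.2.symm⟩

theorem ctr_dg {G : SimpleGraph V} {u w v : V} (hu : v ≠ u) (hw : v ≠ w) (k : ℕ)
    (hk : k ≤ dg G v) (h : G.Adj u v → G.Adj w v → k + 1 ≤ dg G v) : k ≤ dg (ctr G u w) v := by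
  by_cases hwv : G.Adj w v
  · by_cases huv : G.Adj u v
    · have h1 := h huv hwv
      have h2 : ((nb G v).erase w).card = dg G v - 1 := 
        Finset.card_erase_of_mem (mem_nb.mpr hwv.symm)
      have := le_dg (G := ctr G u w) (v := v) ((nb G v).erase w) (by
        intro y hy
        rw [Finset.mem_erase, mem_nb] at hy
        exact ⟨hy.2.ne, hw, hy.1, Or.inl hy.2⟩)
      omega
    · have h2 : ((nb G v).erase w).card = dg G v - 1 := 
        Finset.card_erase_of_mem (mem_nb.mpr hwv.symm)
      have h3 : (insert u ((nb G v).erase w)).card = ((nb G v).erase w).card + 1 := by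
        apply Finset.card_insert_of_notMem
        rw [Finset.mem_erase, mem_nb]
        exact fun h => huv h.2.symm
      by_cases huw : u = w
      · exact absurd (huw ▸ hwv) huv
      have := le_dg (G := ctr G u w) (v := v) (insert u ((nb G v).erase w)) (by
        intro y hy
        rw [Finset.mem_insert, Finset.mem_erase, mem_nb] at hy
        rcases hy with rfl | hy
        · exact ⟨hu, hw, huw, Or.inr (Or.inr ⟨rfl, hwv⟩)⟩
        · exact ⟨hy.2.ne, hw, hy.1, Or.inl hy.2⟩)
      omega
  · refine hk.trans (le_dg (nb G v) ?_)
    intro y hy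
    rw [mem_nb] at hy
    refine ⟨hy.ne, hw, ?_, Or.inl hy⟩
    rintro rfl
    exact hwv hy.symm

theorem ctr_rep {G : SimpleGraph V} {K K' : Finset V} {u w : V} (hR : Rep G K)
    (hu : u ∈ K') (hK : ∀ a ∈ K, a = w ∨ a ∈ K')
    (hL : ∀ v, v ∉ K' → v ≠ w → G.Adj u v → G.Adj w v → 6 ≤ dg G v)
    (hne : ∃ v, v ∉ K' ∧ v ≠ w ∧ ∃ y, G.Adj v y) : Rep (ctr G u w) K' := by
  constructor
  · intro v hv y hvy
    have hvu : v ≠ u := by rintro rfl; exact hv hu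
    have hvw : v ≠ w := hvy.2.1
    have hvK : v ∉ K := fun h => by rcases hK v h with h | h; exacts [hvw h, hv h]
    have h5 : 5 ≤ dg G v := by
      rcases hvy.2.2.2 with h | h | h
      · exact hR.1 v hvK _ h
      · exact absurd h.1 hvu
      · exact hR.1 v hvK _ h.2.symm
    exact ctr_dg hvu hvw 5 h5 (hL v hv hvw)
  · obtain ⟨v, hv, hvw, y, hy⟩ := hne
    have hvu : v ≠ u := by rintro rfl; exact hv hu
    refine ⟨v, hv, ?_⟩
    by_cases hyw : y = w
    · subst hyw
      by_cases huy : u = y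
      · subst huy
        have hvK : v ∉ K := fun h => by rcases hK v h with h | h; exacts [hvw h, hv h]
        have := hR.1 v hvK _ hy
        have h1 := ctr_dg (G := G) hvu hvu 1 (by omega) (fun _ _ => by omega)
        exact dg_pos h1
      exact ⟨u, hvu, hvw, huy, Or.inr (Or.inr ⟨rfl, hy.symm⟩)⟩
    · exact ⟨y, hy.ne, hvw, hyw, Or.inl hy⟩

theorem con {G : SimpleGraph V} (mn : Mn G) {K K' : Finset V} {u w : V} (hR : Rep G K)
    (huw : G.Adj u w) (hT : Typ (ctr G u w) K')
    (hu : u ∈ K') (hK : ∀ a ∈ K, a = w ∨ a ∈ K')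
    (hL : ∀ v, v ∉ K' → v ≠ w → G.Adj u v → G.Adj w v → 6 ≤ dg G v)
    (hne : ∃ v, v ∉ K' ∧ v ≠ w ∧ ∃ y, G.Adj v y) : False := 
  mn.nM (ctr_M huw (mn.ih1 _ (ctr_supp huw) ⟨K', hT, ctr_rep hR hu hK hL hne⟩))

theorem conq {G : SimpleGraph V} (mn : Mn G) {K : Finset V} (K' : Finset V) {u w : V} 
    (hR : Rep G K) (huw : G.Adj u w) (hc : K'.card ≤ 3) (hw : w ∉ K')
    (hu : u ∈ K') (hK : ∀ a ∈ K, a = w ∨ a ∈ K')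
    (hL : ∀ v, v ∉ K' → v ≠ w → G.Adj u v → G.Adj w v → 6 ≤ dg G v)
    (h1 : ∀ a ∈ K', ∀ b ∈ K', a ≠ b → a ≠ u → b ≠ u → G.Adj a b)
    (h2 : ∀ b ∈ K', b ≠ u → G.Adj u b ∨ G.Adj w b) : False := by
  refine con mn hR huw (K' := K') (Or.inl ⟨hc, ?_⟩) hu hK hL ?_
  · intro a ha b hb hab
    refine ⟨hab, fun h => hw (h ▸ ha), fun h => hw (h ▸ hb), ?_⟩
    by_cases hau : a = u
    · subst hau
      rcases h2 b hb hab.symm with h | h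
      · exact Or.inl h
      · exact Or.inr (Or.inl ⟨rfl, h⟩)
    · by_cases hbu : b = u
      · subst hbu
        rcases h2 a ha hab with h | h
        · exact Or.inl h.symm
        · exact Or.inr (Or.inr ⟨rfl, h⟩)
      · exact Or.inl (h1 a ha b hb hab hau hbu)
  · obtain ⟨v, hv, y, hvy⟩ := hR.2
    have h5 := hR.1 v hv y hvy
    obtain ⟨z, hz, hzn⟩ := ex_out (G := G) (v := v) (insert w K') (by
      have := Finset.card_insert_le w K'
      omega)
    rw [Finset.mem_insert, not_or] at hzn
    exact ⟨z, hzn.2, hzn.1, v, hz.symm⟩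

theorem del {G : SimpleGraph V} (mn : Mn G) {K : Finset V} {u w : V} (hR : Rep G K)
    (huw : G.Adj u w) (hu : u ∈ K ∨ 6 ≤ dg G u) (hw : w ∈ K ∨ 6 ≤ dg G w)
    (hT : Typ (G.deleteEdges {s(u, w)}) K) : False := by
  have hadj : ∀ a b, (G.deleteEdges {s(u, w)}).Adj a b ↔ G.Adj a b ∧ s(a, b) ≠ s(u, w) := by
    intro a b
    simp [SimpleGraph.deleteEdges_adj]
  set G' := G.deleteEdges {s(u, w)} with hG'
  have hlt : G' < G := by
    refine lt_of_le_of_ne (fun a b h => ((hadj a b).mp h).1) ?_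
    intro h
    have := (hadj u w).mp (h ▸ huw)
    exact this.2 rfl
  have hdg5 : ∀ v, v ∉ K → 5 ≤ dg G v → 5 ≤ dg G' v := by
    intro v hv h5
    by_cases hvu : v = u
    · subst hvu
      have h6 : 6 ≤ dg G v := by tauto
      have h2 : ((nb G v).erase w).card = dg G v - 1 := 
        Finset.card_erase_of_mem (mem_nb.mpr huw)
      have := le_dg (G := G') (v := v) ((nb G v).erase w) (by
        intro y hy
        rw [Finset.mem_erase, mem_nb] at hy
        rw [hadj]
        refine ⟨hy.2, ?_⟩
        simp [hy.1, hy.2.ne'])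
      omega
    · by_cases hvw : v = w
      · subst hvw
        have h6 : 6 ≤ dg G v := by tauto
        have h2 : ((nb G v).erase u).card = dg G v - 1 := 
          Finset.card_erase_of_mem (mem_nb.mpr huw.symm)
        have := le_dg (G := G') (v := v) ((nb G v).erase u) (by
          intro y hy
          rw [Finset.mem_erase, mem_nb] at hy
          rw [hadj]
          refine ⟨hy.2, ?_⟩
          simp [hy.1, hy.2.ne'])
        omega
      · refine h5.trans (le_dg (nb G v) ?_)
        intro y hy
        rw [mem_nb] at hy
        rw [hadj]
        refine ⟨hy, ?_⟩
        simp [hvu, hvw]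
  refine mn.nM (M_mono hlt.le (mn.ih2 G' hlt ⟨K, hT, ?_, ?_⟩))
  · intro v hv y hvy
    exact hdg5 v hv (hR.1 v hv y ((hadj v y).mp hvy).1)
  · obtain ⟨v, hv, y, hvy⟩ := hR.2
    have h5 := hR.1 v hv y hvy
    exact ⟨v, hv, dg_pos (by have := hdg5 v hv h5; omega)⟩

theorem low {G : SimpleGraph V} (mn : Mn G) {K : Finset V} {t p : V} (hT : Typ G K) (hR : Rep G K)
    (ht : t ∈ K) (hp : p ∉ K) (htp : G.Adj t p) : dg G p = 5 := by
  have h5 := hR.1 p hp t htp.symm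
  by_contra hne
  refine del mn hR htp (Or.inl ht) (Or.inr (by omega)) ?_
  have hadj : ∀ a ∈ K, ∀ b ∈ K, G.Adj a b → (G.deleteEdges {s(t, p)}).Adj a b := by
    intro a ha b hb hab
    have h1 : a ≠ p := fun h => hp (h ▸ ha)
    have h2 : b ≠ p := fun h => hp (h ▸ hb)
    simp [SimpleGraph.deleteEdges_adj, hab, h1, h2]
  rcases hT with ⟨hc, h⟩ | ⟨x, t1, t2, t3, t4, rfl, h⟩
  · exact Or.inl ⟨hc, fun a ha b hb hab => hadj a ha b hb (h a ha b hb hab)⟩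
  · refine Or.inr ⟨x, t1, t2, t3, t4, rfl, ?_, h.h13, h.h24, ?_, ?_, ?_, ?_⟩
    · intro y
      rw [← h.hx]
      constructor
      · intro hy
        rw [SimpleGraph.deleteEdges_adj] at hy
        exact hy.1
      · intro hy
        refine hadj _ (by simp) _ ?_ hy
        have := (h.hx y).mp hy
        simp [this]
    all_goals refine hadj _ (by simp) _ (by simp) ?_
    exacts [h.h12, h.h23, h.h34, h.h41]

end IcoMinor

namespace IcoMinor

set_option linter.unusedSectionVars false

open Finset

variable {V : Type*} [Fintype V]

theorem full5 {G : SimpleGraph V} {v a b c d e : V} (h : dg G v ≤ 5) (ha : G.Adj v a)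
    (hb : G.Adj v b) (hc : G.Adj v c) (hd : G.Adj v d) (he : G.Adj v e)
    (hn : [a, b, c, d, e].Nodup) :
    ∀ y, G.Adj v y ↔ y = a ∨ y = b ∨ y = c ∨ y = d ∨ y = e := by
  have hcard : ([a, b, c, d, e].toFinset).card = 5 := List.toFinset_card_of_nodup hn
  have := all_of (G := G) (v := v) ([a, b, c, d, e].toFinset) (by omega) (by
    intro w hw
    simp only [List.mem_toFinset, List.mem_cons, List.not_mem_nil, or_false] at hw
    rcases hw with rfl | rfl | rfl | rfl | rfl <;> assumption)
  intro y
  constructor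
  · intro hy
    have h1 := this y hy
    simpa using h1
  · rintro (rfl | rfl | rfl | rfl | rfl) <;> assumption

theorem out4 {G : SimpleGraph V} {v : V} (h : 5 ≤ dg G v) (a b c d : V) :
    ∃ y, G.Adj v y ∧ y ≠ a ∧ y ≠ b ∧ y ≠ c ∧ y ≠ d := by
  obtain ⟨y, hy, hn⟩ := ex_out (G := G) (v := v) {a, b, c, d} (by
    have := Finset.card_le_four (a := a) (b := b) (c := c) (d := d)
    omega)
  refine ⟨y, hy, ?_⟩
  simpa using hn

theorem sub5 {G : SimpleGraph V} {v a b c d e : V} (h : 5 ≤ dg G v)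
    (hs : ∀ y, G.Adj v y → y = a ∨ y = b ∨ y = c ∨ y = d ∨ y = e) :
    G.Adj v a ∧ G.Adj v b ∧ G.Adj v c ∧ G.Adj v d ∧ G.Adj v e := by
  have := all_in (G := G) (v := v) {a, b, c, d, e} (by
    have := Finset.card_le_five (a := a) (b := b) (c := c) (d := d) (e := e)
    omega) (by
    intro w hw
    simpa using hs w hw)
  simp at this
  exact this

structure RC (G : SimpleGraph V) (x t1 t2 t3 t4 : V) : Prop where
  mn : Mn G
  rg : Ring G x t1 t2 t3 t4
  rp : Rep G {x, t1, t2, t3, t4}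

theorem RC.rot {G : SimpleGraph V} {x t1 t2 t3 t4 : V} (h : RC G x t1 t2 t3 t4) :
    RC G x t2 t3 t4 t1 := by
  refine ⟨h.mn, ⟨?_, h.rg.h24, h.rg.h13.symm, h.rg.h23, h.rg.h34, h.rg.h41, h.rg.h12⟩, ?_⟩
  · intro y
    rw [h.rg.hx]
    tauto
  · have : ({x, t2, t3, t4, t1} : Finset V) = {x, t1, t2, t3, t4} := by
      ext y; simp; tauto
    rw [this]
    exact h.rp

/-- basic facts about the ring vertices -/
theorem RC.basic {G : SimpleGraph V} {x t1 t2 t3 t4 : V} (h : RC G x t1 t2 t3 t4) :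
    (G.Adj x t1 ∧ G.Adj x t2 ∧ G.Adj x t3 ∧ G.Adj x t4) ∧ [x, t1, t2, t3, t4].Nodup := by
  have h1 := (h.rg.hx t1).mpr (by simp)
  have h2 := (h.rg.hx t2).mpr (by simp)
  have h3 := (h.rg.hx t3).mpr (by simp)
  have h4 := (h.rg.hx t4).mpr (by simp)
  refine ⟨⟨h1, h2, h3, h4⟩, ?_⟩
  have := h1.ne
  have := h2.ne
  have := h3.ne
  have := h4.ne
  have := h.rg.h12.ne
  have := h.rg.h23.ne
  have := h.rg.h34.ne
  have := h.rg.h41.ne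
  have := h.rg.h13
  have := h.rg.h24
  grind

theorem RC.chord {G : SimpleGraph V} {x t1 t2 t3 t4 : V} (h : RC G x t1 t2 t3 t4) :
    ¬ G.Adj t1 t3 := by
  intro h13
  obtain ⟨⟨x1, x2, x3, x4⟩, hnd⟩ := h.basic
  have hadj : ∀ a b, (G.deleteEdges {s(t1, t3)}).Adj a b ↔ G.Adj a b ∧ s(a, b) ≠ s(t1, t3) := by
    intro a b
    simp [SimpleGraph.deleteEdges_adj]
  refine del h.mn h.rp h13 (Or.inl (by simp)) (Or.inl (by simp)) (Or.inr ⟨x, t1, t2, t3, t4, rfl, ?_,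
    h.rg.h13, h.rg.h24, ?_, ?_, ?_, ?_⟩)
  · intro y
    rw [hadj, ← h.rg.hx]
    constructor
    · exact fun h => h.1
    · intro hy
      refine ⟨hy, ?_⟩
      simp only [ne_eq, Sym2.eq_iff]
      grind
  all_goals
    rw [hadj]
    simp only [ne_eq, Sym2.eq_iff]
  · exact ⟨h.rg.h12, by grind⟩
  · exact ⟨h.rg.h23, by grind⟩
  · exact ⟨h.rg.h34, by grind⟩
  · exact ⟨h.rg.h41, by grind⟩

theorem RC.nbr {G : SimpleGraph V} {x t1 t2 t3 t4 p : V} (h : RC G x t1 t2 t3 t4)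
    (hp : p ∉ ({x, t1, t2, t3, t4} : Finset V)) (h1p : G.Adj t1 p) :
    dg G p = 5 ∧ ∃ q, q ∉ ({x, t1, t2, t3, t4} : Finset V) ∧ G.Adj t1 q ∧ G.Adj p q := by
  have hl := low h.mn (Or.inr ⟨x, t1, t2, t3, t4, rfl, h.rg⟩) h.rp (t := t1) (by simp) hp h1p
  refine ⟨hl, ?_⟩
  by_contra hcon
  push Not at hcon
  obtain ⟨⟨x1, x2, x3, x4⟩, hnd⟩ := h.basic
  have hxp : ¬ G.Adj x p := by
    rw [h.rg.hx]; simp at hp; tauto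
  simp only [Finset.mem_insert, Finset.mem_singleton, not_or] at hp
  refine con h.mn h.rp (K' := {x, t1, t2, t3, t4}) h1p 
    (Or.inr ⟨x, t1, t2, t3, t4, rfl, ?_, h.rg.h13, h.rg.h24, ?_, ?_, ?_, ?_⟩) (by simp) 
    (fun a ha => Or.inr ha) ?_ ?_
  · intro y
    rw [ctr_adj, ← h.rg.hx]
    have := hxp
    have : y = p → ¬ G.Adj x y := by rintro rfl; exact hxp
    have := fun h : G.Adj x y => h.ne
    have := G.adj_comm x p
    grind
  · exact ⟨h.rg.h12.ne, by grind, by grind, Or.inl h.rg.h12⟩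
  · exact ⟨h.rg.h23.ne, by grind, by grind, Or.inl h.rg.h23⟩
  · exact ⟨h.rg.h34.ne, by grind, by grind, Or.inl h.rg.h34⟩
  · exact ⟨h.rg.h41.ne, by grind, by grind, Or.inl h.rg.h41⟩
  · intro v hv hvp h1 h2
    exact absurd h2 (hcon v hv h1)
  · obtain ⟨v, hv, hvp, h1, h2, h3⟩ := out4 (G := G) (v := p) (by omega) t1 t2 t3 t4
    refine ⟨v, ?_, hv.ne', p, hv.symm⟩
    have : v ≠ x := by rintro rfl; exact hxp hv.symm
    simp only [Finset.mem_insert, Finset.mem_singleton]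
    tauto

theorem RC.ex {G : SimpleGraph V} {x t1 t2 t3 t4 : V} (h : RC G x t1 t2 t3 t4) :
    ∃ p, p ∉ ({x, t1, t2, t3, t4} : Finset V) ∧ G.Adj t1 p := by
  by_contra hcon
  push Not at hcon
  obtain ⟨⟨x1, x2, x3, x4⟩, hnd⟩ := h.basic
  refine h.mn.nM (cl3 h.mn.ih1 {x, t1} {v | v ∉ ({x, t1, t2, t3, t4} : Finset V)} t2 t3 t4 
    (cn_pair x1) ?_ ?_ ?_ ?_ ?_ ?_ ?_ ?_ ?_ ?_ ?_ ?_ ?_ ?_)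
  · exact h.rp.1
  · exact h.rp.2
  · intro v hv w hvw
    have h1 : w ≠ x := by
      rintro rfl
      have := (h.rg.hx v).mp hvw.symm
      simp at hv; tauto
    have h2 : w ≠ t1 := by
      rintro rfl
      exact hcon v hv hvw.symm
    simp
    tauto
  · intro v hv
    simp at hv ⊢
    tauto
  · grind
  · grind
  · grind
  · simp
  · simp
  · simp
  · exact ⟨x, by simp, x2⟩
  · exact ⟨x, by simp, x3⟩
  · exact ⟨x, by simp, x4⟩
  · exact Or.inr h.rg.h34

theorem RC.d5 {G : SimpleGraph V} {x t1 t2 t3 t4 : V} (h : RC G x t1 t2 t3 t4) : 5 ≤ dg G t1 := by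
  obtain ⟨⟨x1, x2, x3, x4⟩, hnd⟩ := h.basic
  obtain ⟨p, hp, h1p⟩ := h.ex
  obtain ⟨_, q, hq, h1q, hpq⟩ := h.nbr hp h1p
  have hnd2 : [x, t2, t4, p, q].Nodup := by
    have := hpq.ne
    simp at hp hq
    grind
  have := le_dg (G := G) (v := t1) [x, t2, t4, p, q].toFinset (by
    intro w hw
    simp only [List.mem_toFinset, List.mem_cons, List.not_mem_nil, or_false] at hw
    rcases hw with rfl | rfl | rfl | rfl | rfl
    exacts [x1.symm, h.rg.h12, h.rg.h41.symm, h1p, h1q])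
  rwa [List.toFinset_card_of_nodup hnd2] at this

/-- neighbourhood of a ring vertex -/
theorem RC.O {G : SimpleGraph V} {x t1 t2 t3 t4 : V} (h : RC G x t1 t2 t3 t4) :
    ∃ p q, [x, t1, t2, t3, t4, p, q].Nodup ∧ G.Adj p q ∧ dg G p = 5 ∧ dg G q = 5 ∧
      ∀ y, G.Adj t1 y ↔ y = x ∨ y = t2 ∨ y = t4 ∨ y = p ∨ y = q := by
  obtain ⟨⟨x1, x2, x3, x4⟩, hnd⟩ := h.basic
  have r1 := h.d5
  have r2 := h.rot.d5
  have r3 := h.rot.rot.d5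
  have r4 := h.rot.rot.rot.d5
  have hrep : Rep G {x} := by
    constructor
    · intro v hv w hvw
      by_cases hvK : v ∈ ({x, t1, t2, t3, t4} : Finset V)
      · simp only [Finset.mem_insert, Finset.mem_singleton] at hvK hv
        rcases hvK with rfl | rfl | rfl | rfl | rfl
        · exact absurd rfl hv
        all_goals assumption
      · exact h.rp.1 v hvK w hvw
    · exact ⟨t1, by grind, x, x1.symm⟩
  have hl : dg G t1 = 5 := low h.mn (K := {x}) (Or.inl ⟨by simp, by 
    intro a ha b hb hab
    simp at ha hb
    exact absurd (ha.trans hb.symm) hab⟩) hrep (t := x) (by simp) (by grind) x1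
  obtain ⟨p, hp, h1p⟩ := h.ex
  obtain ⟨hp5, q, hq, h1q, hpq⟩ := h.nbr hp h1p
  obtain ⟨hq5, _⟩ := h.nbr hq h1q
  have hpq' := hpq.ne
  simp only [Finset.mem_insert, Finset.mem_singleton, not_or] at hp hq
  refine ⟨p, q, ?_, hpq, hp5, hq5, ?_⟩
  · grind
  · exact full5 hl.le x1.symm h.rg.h12 h.rg.h41.symm h1p h1q (by grind)

theorem RC.common {G : SimpleGraph V} {x t1 t2 t3 t4 : V} (h : RC G x t1 t2 t3 t4) :
    ∃ b, b ∉ ({x, t1, t2, t3, t4} : Finset V) ∧ G.Adj t1 b ∧ G.Adj t2 b := by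
  by_contra hcon
  push Not at hcon
  obtain ⟨⟨x1, x2, x3, x4⟩, hnd⟩ := h.basic
  have ih : IH1 (ctr G t1 t2) := fun G' h1 h2 => 
    h.mn.ih1 G' (h1.trans (ctr_supp h.rg.h12)) h2
  have hDG : ∀ v, v ∉ ({x, t1, t2, t3, t4} : Finset V) → ∀ w, (ctr G t1 t2).Adj v w → 
      G.Adj v w ∨ (w = t1 ∧ G.Adj t2 v) := by
    intro v hv w hvw
    simp only [Finset.mem_insert, Finset.mem_singleton, not_or] at hv
    rcases hvw.2.2.2 with h | h | h
    · exact Or.inl h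
    · exact absurd h.1 hv.2.1
    · exact Or.inr h
  refine h.mn.nM (ctr_M h.rg.h12 
    (cl3 ih {x} {v | v ∉ ({x, t1, t2, t3, t4} : Finset V)} t1 t3 t4 
    (cn_single _ x) ?_ ?_ ?_ ?_ ?_ ?_ ?_ ?_ ?_ ?_ ?_ ?_ ?_ ?_))
  · intro v hv w hvw
    have hv1 : v ∉ ({x, t1, t2, t3, t4} : Finset V) := hv
    have h5 : 5 ≤ dg G v := by
      rcases hDG v hv w hvw with hh | hh
      · exact h.rp.1 v hv w hh
      · exact h.rp.1 v hv _ hh.2.symm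
    refine ctr_dg ?_ ?_ 5 h5 (fun h1 h2 => absurd h2 (hcon v hv h1)) <;> rintro rfl <;> simp at hv1
  · obtain ⟨v, hv, w, hw⟩ := h.rp.2
    refine ⟨v, hv, ?_⟩
    simp only [Finset.mem_insert, Finset.mem_singleton, not_or] at hv
    by_cases hw2 : w = t2
    · subst hw2
      exact ⟨t1, hv.2.1, hv.2.2.1, h.rg.h12.ne, Or.inr (Or.inr ⟨rfl, hw.symm⟩)⟩
    · exact ⟨w, hw.ne, hv.2.2.1, hw2, Or.inl hw⟩
  · intro v hv w hvw
    have h0 : w ≠ t2 := hvw.2.2.1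
    have h1 : w ≠ x := by
      rintro rfl
      have hv1 : v ∉ ({w, t1, t2, t3, t4} : Finset V) := hv
      rcases hDG v hv w hvw with hh | hh
      · have := (h.rg.hx v).mp hh.symm
        simp at hv1; tauto
      · exact x1.ne hh.1
    simp
    tauto
  · intro v hv
    simp at hv ⊢
    tauto
  · grind
  · grind
  · grind
  · simp
  · simp
  · simp
  · exact ⟨x, by simp, x1.ne, x2.ne, h.rg.h12.ne, Or.inl x1⟩
  · exact ⟨x, by simp, x3.ne, x2.ne, h.rg.h23.ne', Or.inl x3⟩
  · exact ⟨x, by simp, x4.ne, x2.ne, h.rg.h24.symm, Or.inl x4⟩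
  · exact Or.inr ⟨h.rg.h34.ne, h.rg.h23.ne', h.rg.h24.symm, Or.inl h.rg.h34⟩

end IcoMinor

namespace IcoMinor

set_option linter.unusedSectionVars false

open Finset

variable {V : Type*} [Fintype V]

theorem RC.O1 {G : SimpleGraph V} {x t1 t2 t3 t4 a : V} (h : RC G x t1 t2 t3 t4) 
    (ha : [x, t1, t2, t3, t4, a].Nodup) (h1a : G.Adj t1 a) :
    ∃ q, [x, t1, t2, t3, t4, a, q].Nodup ∧ G.Adj a q ∧ dg G a = 5 ∧ dg G q = 5 ∧
      ∀ y, G.Adj t1 y ↔ y = x ∨ y = t2 ∨ y = t4 ∨ y = a ∨ y = q := by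
  obtain ⟨p, q, hn, hpq, hp, hq, hN⟩ := h.O
  have := (hN a).mp h1a
  have hqp := hpq.symm
  have : a = p ∨ a = q := by grind
  rcases this with rfl | rfl
  · exact ⟨q, hn, hpq, hp, hq, hN⟩
  · refine ⟨p, by grind, hqp, hq, hp, ?_⟩
    intro y
    rw [hN]
    tauto

theorem RC.O2 {G : SimpleGraph V} {x t1 t2 t3 t4 a b : V} (h : RC G x t1 t2 t3 t4) 
    (ha : [x, t1, t2, t3, t4, a, b].Nodup) (h1a : G.Adj t1 a) (h1b : G.Adj t1 b) :
    G.Adj a b ∧ ∀ y, G.Adj t1 y ↔ y = x ∨ y = t2 ∨ y = t4 ∨ y = a ∨ y = b := by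
  obtain ⟨q, hn, hpq, hp, hq, hN⟩ := h.O1 (a := a) (by grind) h1a
  have := (hN b).mp h1b
  have hqp := hpq.symm
  have : b = q := by grind
  subst this
  exact ⟨hpq, hN⟩

theorem sing_disj {a b : V} (h : a ≠ b) : Disjoint ({a} : Set V) {b} := by
  simpa using h

theorem sing_E {G : SimpleGraph V} {a b : V} (h : G.Adj a b) : E G {a} {b} := 
  ⟨a, rfl, b, rfl, h⟩

/-- `K6minus` with one two-element branch set (and missing edge `a b`). -/
theorem k6_1 {G : SimpleGraph V} {a b c d e f g : V} (hn : [a, b, c, d, e, f, g].Nodup)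
    (hfg : G.Adj f g) (hac : G.Adj a c) (had : G.Adj a d) (hae : G.Adj a e) (hbc : G.Adj b c)
    (hbd : G.Adj b d) (hbe : G.Adj b e) (hcd : G.Adj c d) (hce : G.Adj c e) (hde : G.Adj d e)
    (ha : G.Adj a f ∨ G.Adj a g) (hb : G.Adj b f ∨ G.Adj b g) (hc : G.Adj c f ∨ G.Adj c g)
    (hd : G.Adj d f ∨ G.Adj d g) (he : G.Adj e f ∨ G.Adj e g) : M G := by
  have key : ∀ v, (G.Adj v f ∨ G.Adj v g) → E G {v} {f, g} := by
    rintro v (h | h)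
    · exact ⟨v, rfl, f, by simp, h⟩
    · exact ⟨v, rfl, g, by simp, h⟩
  have dis : ∀ v, v ≠ f → v ≠ g → Disjoint ({v} : Set V) {f, g} := by
    intro v h1 h2
    simp [h1, h2]
  refine k6_of (cn_single G a) (cn_single G b) (cn_single G c) (cn_single G d) (cn_single G e)
    (cn_pair hfg) ?_ ?_ ?_ ?_ (dis _ ?_ ?_) ?_ ?_ ?_ (dis _ ?_ ?_) ?_ ?_ (dis _ ?_ ?_) ?_ (dis _ ?_ ?_)
    (dis _ ?_ ?_)
    (sing_E hac) (sing_E had) (sing_E hae) (key a ha) (sing_E hbc) (sing_E hbd) (sing_E hbe)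
    (key b hb) (sing_E hcd) (sing_E hce) (key c hc) (sing_E hde) (key d hd) (key e he)
  all_goals first
    | (refine sing_disj ?_; grind)
    | grind

theorem RC.ringF {G : SimpleGraph V} {x t1 t2 t3 t4 : V} (h : RC G x t1 t2 t3 t4) :
    Cn G {x, t1, t2, t3, t4} := by
  obtain ⟨⟨x1, x2, x3, x4⟩, hnd⟩ := h.basic
  refine cn_star (x := x) (by simp) ?_
  intro y hy hne
  simp only [Set.mem_insert_iff, Set.mem_singleton_iff] at hy
  rw [h.rg.hx]
  tauto

set_option maxHeartbeats 2000000 in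
theorem RC.caseB {G : SimpleGraph V} {x t1 t2 t3 t4 a : V} (h : RC G x t1 t2 t3 t4) 
    (ha : [x, t1, t2, t3, t4, a].Nodup) (h4a : G.Adj t4 a) (h1a : G.Adj t1 a) (h2a : G.Adj t2 a) :
    False := by
  obtain ⟨⟨x1, x2, x3, x4⟩, hnd⟩ := h.basic
  obtain ⟨q1, n1, aq1, a5, q15, N1⟩ := h.O1 ha h1a
  obtain ⟨q2, n2, aq2, -, q25, N2⟩ := h.rot.O1 (by grind) h2a
  obtain ⟨q4, n4, aq4, -, q45, N4⟩ := h.rot.rot.rot.O1 (by grind) h4a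
  simp only [List.nodup_cons, List.mem_cons, List.not_mem_nil, or_false, not_or, List.nodup_nil, and_true, not_false_eq_true] at ha hnd n1 n2 n4
  have e12 := h.rg.h12
  have e23 := h.rg.h23
  have e34 := h.rg.h34
  have e41 := h.rg.h41
  by_cases h3a : G.Adj t3 a
  · obtain ⟨q3, n3, aq3, -, q35, N3⟩ := h.rot.rot.O1 (by grind) h3a
    simp only [List.nodup_cons, List.mem_cons, List.not_mem_nil, or_false, not_or, List.nodup_nil, and_true, not_false_eq_true] at n3
    have Na := full5 a5.le h1a.symm h2a.symm h3a.symm h4a.symm aq1 (by grind)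
    have b2 := (Na q2).mp aq2
    have b3 := (Na q3).mp aq3
    have b4 := (Na q4).mp aq4
    have : q2 = q1 := by grind
    have : q3 = q1 := by grind
    have : q4 = q1 := by grind
    subst q2 q3 q4
    have c1 : G.Adj t1 q1 := (N1 q1).mpr (by simp)
    have c2 : G.Adj t2 q1 := (N2 q1).mpr (by simp)
    have c3 : G.Adj t3 q1 := (N3 q1).mpr (by simp)
    have c4 : G.Adj t4 q1 := (N4 q1).mpr (by simp)
    exact h.mn.nM (k6_1 (a := t2) (b := t4) (c := t3) (d := a) (e := q1) (f := x) (g := t1)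
      (by grind) x1 e23 h2a c2 e34.symm h4a c4 h3a c3 aq1 (Or.inl x2.symm) (Or.inl x4.symm)
      (Or.inl x3.symm) (Or.inr h1a.symm) (Or.inr c1.symm))
  · obtain ⟨c, hcK, h2c, h3c⟩ := h.rot.common
    obtain ⟨d, hdK, h3d, h4d⟩ := h.rot.rot.common
    simp only [Finset.mem_insert, Finset.mem_singleton, not_or] at hcK hdK
    have hca : c ≠ a := by rintro rfl; exact h3a h3c
    have hda : d ≠ a := by rintro rfl; exact h3a h3d
    have : q2 = c := by have := (N2 c).mp h2c; grind
    subst q2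
    have : q4 = d := by have := (N4 d).mp h4d; grind
    subst q4
    have c1 : G.Adj t1 q1 := (N1 q1).mpr (by simp)
    by_cases hcd : c = d
    · subst d
      obtain ⟨q3, n3, cq3, c5, q35, N3⟩ := h.rot.rot.O1 (by grind) h3c
      simp only [List.nodup_cons, List.mem_cons, List.not_mem_nil, or_false, not_or, List.nodup_nil, and_true, not_false_eq_true] at n3
      have c3 : G.Adj t3 q3 := (N3 q3).mpr (by simp)
      have hq3a : q3 ≠ a := by rintro rfl; exact h3a c3
      have hq1c : q1 ≠ c := by
        rintro rfl
        have Nc := full5 c5.le c1.symm h2c.symm h3c.symm h4d.symm aq1.symm (by grind)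
        have := (Nc q3).mp cq3
        grind
      have Na := full5 a5.le h1a.symm h2a.symm h4a.symm aq2 aq1 (by grind)
      have Nc := full5 c5.le h2c.symm h3c.symm h4d.symm aq2.symm cq3 (by grind)
      have hF : Cn G {c, a, x, t1, t2, t3, t4} := 
        cn_insert (cn_insert h.ringF (b := t1) (by simp) h1a.symm) (b := t2) (by simp) h2c.symm
      have hxN := h.rg.hx
      refine h.mn.nM (cl3 h.mn.ih1 {c, a, x, t1, t2, t3, t4} 
        {v | v ∉ ({c, a, x, t1, t2, t3, t4} : Set V) ∧ v ≠ q1 ∧ v ≠ q3} q1 q3 q3 hF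
        ?_ ?_ ?_ (fun v hv => hv.1) ?_ ?_ ?_ ?_ ?_ ?_ ⟨t1, by simp, c1⟩ ⟨t3, by simp, c3⟩ 
          ⟨t3, by simp, c3⟩ (Or.inl rfl))
      · rintro v ⟨hv, -⟩ w hvw
        refine h.rp.1 v ?_ w hvw
        simp at hv ⊢
        tauto
      · have hex : ∃ v, G.Adj q1 v ∧ v ≠ t1 ∧ v ≠ a ∧ v ≠ q3 ∧ (v = t3 → q1 = q3) ∧ 
            (v = c → q1 = q3) ∧ (q1 = q3 → v ≠ t3 ∧ v ≠ c) := by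
          by_cases hq : q1 = q3
          · obtain ⟨v, h1, h2, h3, h4, h5⟩ := out4 (G := G) (v := q1) q15.ge t1 a t3 c
            exact ⟨v, h1, h2, h3, by rintro rfl; exact h1.ne hq, by tauto, by tauto, by tauto⟩
          · obtain ⟨v, h1, h2, h3, h4, h5⟩ := out4 (G := G) (v := q1) q15.ge t1 a q3 q3
            refine ⟨v, h1, h2, h3, h4, ?_, ?_, fun h => absurd h hq⟩
            · rintro rfl
              have := (N3 q1).mp h1.symm
              grind
            · rintro rfl
              have := (Nc q1).mp h1.symm
              grind
        obtain ⟨v, h1, h2, h3, h4, h5, h6, h7⟩ := hex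
        refine ⟨v, ⟨?_, h1.ne', h4⟩, q1, h1.symm⟩
        have := (hxN q1)
        have := (N2 q1)
        have := (N4 q1)
        have := h1.symm
        simp only [Set.mem_insert_iff, Set.mem_singleton_iff]
        grind
      · rintro v ⟨hv, hv1, hv3⟩ w hvw
        simp only [Set.mem_insert_iff, Set.mem_singleton_iff, Set.mem_ofPred_eq] at hv ⊢
        have hvw' := hvw.symm
        by_cases hw : w ∈ ({c, a, x, t1, t2, t3, t4} : Set V)
        · exfalso
          simp only [Set.mem_insert_iff, Set.mem_singleton_iff] at hw
          rcases hw with rfl | rfl | rfl | rfl | rfl | rfl | rfl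
          · rw [Nc] at hvw'; grind
          · rw [Na] at hvw'; grind
          · rw [hxN] at hvw'; grind
          · rw [N1] at hvw'; grind
          · rw [N2] at hvw'; grind
          · rw [N3] at hvw'; grind
          · rw [N4] at hvw'; grind
        · simp only [Set.mem_insert_iff, Set.mem_singleton_iff] at hw
          tauto
      · simp only [Set.mem_insert_iff, Set.mem_singleton_iff, not_or]; exact ⟨by grind, by grind, by grind, by grind, by grind, by grind, by grind⟩
      · simp only [Set.mem_insert_iff, Set.mem_singleton_iff, not_or]; exact ⟨by grind, by grind, by grind, by grind, by grind, by grind, by grind⟩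
      · simp only [Set.mem_insert_iff, Set.mem_singleton_iff, not_or]; exact ⟨by grind, by grind, by grind, by grind, by grind, by grind, by grind⟩
      · simp
      · simp
      · simp
    · obtain ⟨hcd', N3⟩ := h.rot.rot.O2 (a := c) (b := d) (by grind) h3c h3d
      have Na := full5 a5.le h1a.symm h2a.symm h4a.symm aq2 aq4 (by grind)
      have hq1 : q1 = c ∨ q1 = d := by have := (Na q1).mp aq1; grind
      have hF : Cn G {a, x, t1, t2, t3, t4} := cn_insert h.ringF (b := t1) (by simp) h1a.symm
      have hxN := h.rg.hx
      refine h.mn.nM (cl3 h.mn.ih1 {a, x, t1, t2, t3, t4} 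
        {v | v ∉ ({a, x, t1, t2, t3, t4} : Set V) ∧ v ≠ c ∧ v ≠ d} c d d hF
        ?_ ?_ ?_ (fun v hv => hv.1) ?_ ?_ ?_ ?_ ?_ ?_ ⟨t3, by simp, h3c⟩ ⟨t3, by simp, h3d⟩ 
          ⟨t3, by simp, h3d⟩ (Or.inl rfl))
      · rintro v ⟨hv, -⟩ w hvw
        refine h.rp.1 v ?_ w hvw
        simp at hv ⊢
        tauto
      · rcases hq1 with rfl | rfl
        · obtain ⟨v, h1, h2, h3, h4, h5⟩ := out4 (G := G) (v := d) q45.ge t3 t4 a q1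
          refine ⟨v, ⟨?_, h5, h1.ne'⟩, d, h1.symm⟩
          have := (hxN d)
          have := (N1 d)
          have := (N2 d)
          have := h1.symm
          simp only [Set.mem_insert_iff, Set.mem_singleton_iff]
          grind
        · obtain ⟨v, h1, h2, h3, h4, h5⟩ := out4 (G := G) (v := c) q25.ge t2 t3 a q1
          refine ⟨v, ⟨?_, h1.ne', h5⟩, c, h1.symm⟩
          have := (hxN c)
          have := (N1 c)
          have := (N4 c)
          have := h1.symm
          simp only [Set.mem_insert_iff, Set.mem_singleton_iff]
          grind
      · rintro v ⟨hv, hv1, hv3⟩ w hvw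
        simp only [Set.mem_insert_iff, Set.mem_singleton_iff, Set.mem_ofPred_eq] at hv ⊢
        have hvw' := hvw.symm
        by_cases hw : w ∈ ({a, x, t1, t2, t3, t4} : Set V)
        · exfalso
          simp only [Set.mem_insert_iff, Set.mem_singleton_iff] at hw
          rcases hw with rfl | rfl | rfl | rfl | rfl | rfl
          · rw [Na] at hvw'; grind
          · rw [hxN] at hvw'; grind
          · rw [N1] at hvw'; grind
          · rw [N2] at hvw'; grind
          · rw [N3] at hvw'; grind
          · rw [N4] at hvw'; grind
        · simp only [Set.mem_insert_iff, Set.mem_singleton_iff] at hw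
          tauto
      · grind
      · grind
      · grind
      · simp
      · simp
      · simp

set_option maxHeartbeats 2000000 in
theorem RC.false {G : SimpleGraph V} {x t1 t2 t3 t4 : V} (h : RC G x t1 t2 t3 t4) : False := by
  obtain ⟨⟨x1, x2, x3, x4⟩, hnd⟩ := h.basic
  simp only [List.nodup_cons, List.mem_cons, List.not_mem_nil, or_false, not_or, List.nodup_nil, and_true, not_false_eq_true] at hnd
  have e12 := h.rg.h12
  have e23 := h.rg.h23
  have e34 := h.rg.h34
  have e41 := h.rg.h41
  have hxN := h.rg.hx
  obtain ⟨b, hb, h1b, h2b⟩ := h.common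
  obtain ⟨c, hc, h2c, h3c⟩ := h.rot.common
  obtain ⟨d, hd, h3d, h4d⟩ := h.rot.rot.common
  obtain ⟨a, ha, h4a, h1a⟩ := h.rot.rot.rot.common
  simp only [Finset.mem_insert, Finset.mem_singleton, not_or] at ha hb hc hd
  have hab : a ≠ b := by rintro rfl; exact h.caseB (by grind) h4a h1a h2b
  have hbc : b ≠ c := by rintro rfl; exact h.rot.caseB (by grind) h1b h2b h3c
  have hcd : c ≠ d := by rintro rfl; exact h.rot.rot.caseB (by grind) h2c h3c h4d
  have hda : d ≠ a := by rintro rfl; exact h.rot.rot.rot.caseB (by grind) h3d h4d h1a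
  have hac : a ≠ c := by rintro rfl; exact h.caseB (by grind) h4a h1a h2c
  have hbd : b ≠ d := by rintro rfl; exact h.rot.caseB (by grind) h1b h2b h3d
  obtain ⟨ab, N1⟩ := h.O2 (a := a) (b := b) (by grind) h1a h1b
  obtain ⟨bc, N2⟩ := h.rot.O2 (a := b) (b := c) (by grind) h2b h2c
  obtain ⟨cd, N3⟩ := h.rot.rot.O2 (a := c) (b := d) (by grind) h3c h3d
  obtain ⟨da, N4⟩ := h.rot.rot.rot.O2 (a := d) (b := a) (by grind) h4d h4a
  have a5 := h.nbr (p := a) (by simp; grind) h1a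
  have b5 := h.nbr (p := b) (by simp; grind) h1b
  by_cases hout : ∃ v w, v ∉ ({x, t1, t2, t3, t4} : Set V) ∧ v ≠ a ∧ v ≠ b ∧ v ≠ c ∧ v ≠ d ∧ 
      G.Adj v w ∧ (w = a ∨ w = b ∨ w = c ∨ w = d)
  · refine h.mn.nM (cl4 h.mn.ih1 {x, t1, t2, t3, t4} 
      {v | v ∉ ({x, t1, t2, t3, t4} : Set V) ∧ v ≠ a ∧ v ≠ b ∧ v ≠ c ∧ v ≠ d} a b c d x t1
      h.ringF (by simp) (by simp) x1.ne ?_ ?_ ?_ (fun v hv => hv.1) ?_ hac hbd ab bc cd da)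
    · rintro v ⟨hv, -⟩ w hvw
      refine h.rp.1 v ?_ w hvw
      simp at hv ⊢
      tauto
    · obtain ⟨v, w, h1, h2, h3, h4, h5, h6, -⟩ := hout
      exact ⟨v, ⟨h1, h2, h3, h4, h5⟩, w, h6⟩
    · rintro v ⟨hv, hv1, hv3⟩ w hvw
      simp only [Set.mem_insert_iff, Set.mem_singleton_iff, Set.mem_ofPred_eq] at hv ⊢
      have hvw' := hvw.symm
      by_cases hw : w ∈ ({x, t1, t2, t3, t4} : Set V)
      · exfalso
        simp only [Set.mem_insert_iff, Set.mem_singleton_iff] at hw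
        rcases hw with rfl | rfl | rfl | rfl | rfl
        · rw [hxN] at hvw'; grind
        · rw [N1] at hvw'; grind
        · rw [N2] at hvw'; grind
        · rw [N3] at hvw'; grind
        · rw [N4] at hvw'; grind
      · simp only [Set.mem_insert_iff, Set.mem_singleton_iff] at hw
        tauto
    · rintro v (rfl | rfl | rfl | rfl)
      · exact ⟨by grind, by simp, t1, by simp, h1a⟩
      · exact ⟨by grind, by simp, t1, by simp, h1b⟩
      · exact ⟨by grind, by simp, t2, by simp, h2c⟩
      · exact ⟨by grind, by simp, t3, by simp, h3d⟩
  · push Not at hout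
    have hac' := (sub5 (G := G) (v := a) (a := t4) (b := t1) (c := b) (d := c) (e := d) a5.1.ge (by
      intro y hy
      have h1 := hout y a
      have h2 := hxN a
      have h3 := N2 a
      have h4 := N3 a
      have := hy.symm
      have := hy.ne
      simp only [Set.mem_insert_iff, Set.mem_singleton_iff] at h1
      grind)).2.2.2.1
    have hbd' := (sub5 (G := G) (v := b) (a := t1) (b := t2) (c := a) (d := c) (e := d) b5.1.ge (by
      intro y hy
      have h1 := hout y b
      have h2 := hxN b
      have h3 := N3 b
      have h4 := N4 b
      have := hy.symm
      have := hy.ne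
      simp only [Set.mem_insert_iff, Set.mem_singleton_iff] at h1
      grind)).2.2.2.2
    -- K6minus on nine vertices
    refine h.mn.nM (k6_of (cn_single G t2) (cn_single G t4) (cn_single G t3) (cn_pair x1) 
      (cn_pair hac') (cn_pair hbd') ?_ ?_ ?_ ?_ ?_ ?_ ?_ ?_ ?_ ?_ ?_ ?_ ?_ ?_ ?_
      (sing_E e23) ⟨t2, rfl, t1, by simp, e12.symm⟩ ⟨t2, rfl, c, by simp, h2c⟩ 
      ⟨t2, rfl, b, by simp, h2b⟩ (sing_E e34.symm) ⟨t4, rfl, t1, by simp, e41⟩ 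
      ⟨t4, rfl, a, by simp, h4a⟩ ⟨t4, rfl, d, by simp, h4d⟩ ⟨t3, rfl, x, by simp, x3.symm⟩
      ⟨t3, rfl, c, by simp, h3c⟩ ⟨t3, rfl, d, by simp, h3d⟩ ⟨t1, by simp, a, by simp, h1a⟩
      ⟨t1, by simp, b, by simp, h1b⟩ ⟨a, by simp, b, by simp, ab⟩)
    all_goals
      rw [Set.disjoint_left]
      simp only [Set.mem_insert_iff, Set.mem_singleton_iff]
      grind

end IcoMinor

namespace IcoMinor

set_option linter.unusedSectionVars false

open Finset

variable {V : Type*} [Fintype V]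

theorem four_ring (p12 p13 p14 p23 p24 p34 : Prop)
    (h1 : (p12 ∧ p13) ∨ (p12 ∧ p14) ∨ (p13 ∧ p14)) (h2 : (p12 ∧ p23) ∨ (p12 ∧ p24) ∨ (p23 ∧ p24))
    (h3 : (p13 ∧ p23) ∨ (p13 ∧ p34) ∨ (p23 ∧ p34)) (h4 : (p14 ∧ p24) ∨ (p14 ∧ p34) ∨ (p24 ∧ p34)) :
    (p12 ∧ p23 ∧ p34 ∧ p14) ∨ (p12 ∧ p24 ∧ p34 ∧ p13) ∨ (p13 ∧ p23 ∧ p24 ∧ p14) := by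
  tauto

set_option maxHeartbeats 2000000 in
theorem case1 {G : SimpleGraph V} (mn : Mn G) {x : V} (hR : Rep G {x}) (hx : ∃ w, G.Adj x w)
    (hd : dg G x ≤ 4) : False := by
  have hT : Typ G {x} := Or.inl ⟨by simp, by simp +contextual⟩
  have hlow : ∀ t, G.Adj x t → dg G t = 5 := by
    intro t ht
    exact low mn hT hR (by simp) (by simpa using ht.ne') ht
  have hcl : ∀ t, G.Adj x t → (∀ a b, a ≠ b → G.Adj x a → G.Adj t a → G.Adj x b → G.Adj t b → 
      G.Adj a b) → 2 < ((nb G x).filter (fun y => G.Adj t y)).card := by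
    intro t ht h
    by_contra hc
    refine conq mn (insert x ((nb G x).filter (fun y => G.Adj t y))) hR ht ?_ ?_ (by simp) ?_ ?_ ?_ ?_
    · have := Finset.card_insert_le x ((nb G x).filter (fun y => G.Adj t y))
      omega
    · simp [ht.ne']
    · simp
    · intro v hv1 hv2 h1 h2
      exfalso
      apply hv1
      simp [mem_nb, h1, h2]
    · intro a ha b hb hab hax hbx
      simp only [Finset.mem_insert, Finset.mem_filter, mem_nb] at ha hb
      exact h a b hab (by tauto) (by tauto) (by tauto) (by tauto)
    · intro b hb hbx
      simp only [Finset.mem_insert, Finset.mem_filter, mem_nb] at hb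
      tauto
  have h2 : ∀ t, G.Adj x t → ∃ a b, a ≠ b ∧ G.Adj x a ∧ G.Adj x b ∧ G.Adj t a ∧ G.Adj t b := by
    intro t ht
    by_contra hcon
    push Not at hcon
    have h3 := hcl t ht (fun a b h1 h2 h3 h4 h5 => absurd h5 (hcon a b h1 h2 h4 h3))
    obtain ⟨a, b, c, ha, hb, hc, hab, _⟩ := Finset.two_lt_card_iff.mp h3
    simp only [Finset.mem_filter, mem_nb] at ha hb
    exact hcon a b hab ha.1 hb.1 ha.2 hb.2
  obtain ⟨t, ht⟩ := hx
  obtain ⟨a, b, hab, xa, xb, ta, tb⟩ := h2 t ht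
  by_cases hex : ∃ d, G.Adj x d ∧ d ≠ t ∧ d ≠ a ∧ d ≠ b
  · obtain ⟨d, xd, hdt, hda, hdb⟩ := hex
    have hN : ∀ y, G.Adj x y ↔ y = t ∨ y = a ∨ y = b ∨ y = d := by
      have hc : ([t, a, b, d].toFinset).card = 4 := List.toFinset_card_of_nodup (by
        have := ta.ne
        have := tb.ne
        grind)
      have := all_of (G := G) (v := x) ([t, a, b, d].toFinset) (by omega) (by
        intro w hw
        simp at hw
        rcases hw with rfl | rfl | rfl | rfl <;> assumption)
      intro y
      constructor
      · intro h
        simpa using this y h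
      · rintro (rfl | rfl | rfl | rfl) <;> assumption
    have key : ∀ t1 t2 t3 t4, (∀ y, G.Adj x y ↔ y = t1 ∨ y = t2 ∨ y = t3 ∨ y = t4) → t1 ≠ t3 → 
        t2 ≠ t4 → G.Adj t1 t2 → G.Adj t2 t3 → G.Adj t3 t4 → G.Adj t4 t1 → False := by
      intro t1 t2 t3 t4 hN h13 h24 h12 h23 h34 h41
      refine RC.false (G := G) (x := x) (t1 := t1) (t2 := t2) (t3 := t3) (t4 := t4) 
        ⟨mn, ⟨hN, h13, h24, h12, h23, h34, h41⟩, ?_, ?_⟩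
      · intro v hv
        exact hR.1 v (by simp at hv ⊢; tauto)
      · have h5 := hlow t1 ((hN t1).mpr (by simp))
        obtain ⟨y, h1, h2, h3, h4, h5⟩ := out4 (G := G) (v := t1) h5.ge x t2 t3 t4
        exact ⟨y, by simp [h2, h3, h4, h5, h1.ne'], t1, h1.symm⟩
    have hN2 : ∀ y, G.Adj x y ↔ y = t ∨ y = a ∨ y = d ∨ y = b := by
      intro y; rw [hN, or_comm (a := y = b)]
    have hN3 : ∀ y, G.Adj x y ↔ y = t ∨ y = b ∨ y = a ∨ y = d := by
      intro y; rw [hN, or_left_comm (a := y = a)]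
    have hdeg : ∀ s, G.Adj x s → (G.Adj s t ∧ G.Adj s a) ∨ (G.Adj s t ∧ G.Adj s b) ∨
        (G.Adj s t ∧ G.Adj s d) ∨ (G.Adj s a ∧ G.Adj s b) ∨ (G.Adj s a ∧ G.Adj s d) ∨ 
        (G.Adj s b ∧ G.Adj s d) := by
      intro s hs
      obtain ⟨p, q, hpq, xp, xq, sp, sq⟩ := h2 s hs
      have hp := (hN p).mp xp
      have hq := (hN q).mp xq
      rcases hp with rfl | rfl | rfl | rfl <;> rcases hq with rfl | rfl | rfl | rfl <;> tauto
    have dt := hdeg t ht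
    have da := hdeg a xa
    have db := hdeg b xb
    have dd := hdeg d xd
    simp only [SimpleGraph.irrefl, false_and, and_false, false_or, or_false] at dt da db dd
    simp only [G.adj_comm a t, G.adj_comm b t, G.adj_comm d t, G.adj_comm b a, G.adj_comm d a,
      G.adj_comm d b] at dt da db dd
    have := four_ring (G.Adj t a) (G.Adj t b) (G.Adj t d) (G.Adj a b) (G.Adj a d) (G.Adj b d)
      dt da db dd
    rcases this with ⟨e1, e2, e3, e4⟩ | ⟨e1, e2, e3, e4⟩ | ⟨e1, e2, e3, e4⟩
    · exact key t a b d hN tb.ne hda.symm e1 e2 e3 e4.symm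
    · exact key t a d b hN2 hdt.symm hab e1 e2 e3.symm e4.symm
    · exact key t b a d hN3 ta.ne hdb.symm e1 e2.symm e3 e4.symm
  · push Not at hex
    have hin : ∀ y, G.Adj x y → y = t ∨ y = a ∨ y = b := by
      intro y hy
      have := hex y hy
      tauto
    have hadj : G.Adj a b := by
      obtain ⟨p, q, hpq, xp, xq, sp, sq⟩ := h2 a xa
      have hp := hin p xp
      have hq := hin q xq
      have := sp.ne
      have := sq.ne
      rcases hp with rfl | rfl | rfl <;> rcases hq with rfl | rfl | rfl <;> tauto
    have h3 := hcl t ht (by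
      intro p q hpq h1 h2 h3 h4
      have hp := hin p h1
      have hq := hin q h3
      have := h2.ne
      have := h4.ne
      have := hadj.symm
      rcases hp with rfl | rfl | rfl <;> rcases hq with rfl | rfl | rfl <;> tauto)
    have h4 : (nb G x).filter (fun y => G.Adj t y) ⊆ {a, b} := by
      intro y hy
      simp only [Finset.mem_filter, mem_nb] at hy
      have := hin y hy.1
      have := hy.2.ne
      simp only [Finset.mem_insert, Finset.mem_singleton]
      grind
    have := (Finset.card_le_card h4).trans Finset.card_le_two
    omega

/-- vertices of `G` outside `K` give a nonisolated vertex -/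
theorem c2a {G : SimpleGraph V} (mn : Mn G) {t1 t2 p : V} (hR : Rep G {t1, t2}) (h12 : G.Adj t1 t2)
    (hp : p ≠ t2) (h1p : G.Adj t1 p) : 
    dg G p = 5 ∧ ∃ q, q ≠ t1 ∧ q ≠ t2 ∧ G.Adj t1 q ∧ G.Adj p q := by
  have h21 := h12.symm
  have hT : Typ G {t1, t2} := Or.inl ⟨Finset.card_le_two.trans (by simp), by
    simp only [Finset.mem_insert, Finset.mem_singleton]
    rintro a (rfl | rfl) b (rfl | rfl) hab <;> tauto⟩
  refine ⟨low mn hT hR (t := t1) (by simp) (by simp [hp, h1p.ne']) h1p, ?_⟩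
  by_contra hcon
  push Not at hcon
  refine conq mn {t1, t2} hR h1p (Finset.card_le_two.trans (by simp)) (by simp [hp, h1p.ne']) 
    (by simp) (fun a ha => Or.inr ha) ?_ ?_ ?_
  · intro v hv _ h1 h2
    simp at hv
    exact absurd h2 (hcon v hv.1 hv.2 h1)
  · simp only [Finset.mem_insert, Finset.mem_singleton]
    rintro a (rfl | rfl) b (rfl | rfl) hab <;> tauto
  · simp only [Finset.mem_insert, Finset.mem_singleton]
    rintro a (rfl | rfl) <;> tauto

theorem c2b {G : SimpleGraph V} (mn : Mn G) {t1 t2 : V} (hR : Rep G {t1, t2}) (h12 : G.Adj t1 t2) :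
    ∃ p, p ≠ t2 ∧ G.Adj t1 p := by
  by_contra hcon
  push Not at hcon
  refine mn.nM (cl3 mn.ih1 {t1} {v | v ∉ ({t1, t2} : Finset V)} t2 t2 t2 (cn_single G t1) ?_ ?_ ?_ 
    ?_ ?_ ?_ ?_ ?_ ?_ ?_ ⟨t1, rfl, h12⟩ ⟨t1, rfl, h12⟩ ⟨t1, rfl, h12⟩ (Or.inl rfl))
  · intro v hv w
    exact hR.1 v hv w
  · exact hR.2
  · intro v hv w hvw
    by_cases hw : w = t1
    · subst hw
      simp at hv
      exact absurd hvw.symm (hcon v hv.2)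
    · simp [hw]
      tauto
  · intro v hv
    simp at hv ⊢
    exact hv.1
  all_goals simp [h12.ne']

theorem c2c {G : SimpleGraph V} (mn : Mn G) {t1 t2 a b c : V} (hR : Rep G {t1, t2}) 
    (h12 : G.Adj t1 t2) (h1 : ∀ y, G.Adj t1 y → y = t2 ∨ y = a ∨ y = b ∨ y = c)
    (h2 : ∀ y, G.Adj t2 y → y = t1 ∨ y = a ∨ y = b ∨ y = c)
    (ha : G.Adj t1 a) (hb : G.Adj t1 b) (hc : G.Adj t1 c) (ha2 : a ≠ t2) (hb2 : b ≠ t2) 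
    (hc2 : c ≠ t2) (hbc : G.Adj b c) (ha5 : dg G a = 5) : False := by
  refine mn.nM (cl3 mn.ih1 {t1, t2} {v | v ≠ t1 ∧ v ≠ t2 ∧ v ≠ a ∧ v ≠ b ∧ v ≠ c} a b c 
    (cn_pair h12) ?_ ?_ ?_ ?_ ?_ ?_ ?_ ?_ ?_ ?_ ⟨t1, by simp, ha⟩ ⟨t1, by simp, hb⟩ 
    ⟨t1, by simp, hc⟩ (Or.inr hbc))
  · intro v hv w
    simp at hv
    exact hR.1 v (by simp; tauto) w
  · obtain ⟨y, e1, e2, e3, e4, e5⟩ := out4 (G := G) (v := a) ha5.ge t1 t2 b c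
    exact ⟨y, ⟨e2, e3, e1.ne', e4, e5⟩, a, e1.symm⟩
  · intro v hv w hvw
    simp at hv ⊢
    by_cases hw1 : w = t1
    · subst hw1
      have := h1 v hvw.symm
      tauto
    by_cases hw2 : w = t2
    · subst hw2
      have := h2 v hvw.symm
      tauto
    tauto
  · intro v hv
    simp at hv ⊢
    tauto
  · simp [ha.ne', ha2]
  · simp [hb.ne', hb2]
  · simp [hc.ne', hc2]
  all_goals simp

theorem nb4 {G : SimpleGraph V} {v a b c d : V} (h : dg G v ≤ 4) (ha : G.Adj v a)
    (hb : G.Adj v b) (hc : G.Adj v c) (hd : G.Adj v d) (hn : [a, b, c, d].Nodup) :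
    ∀ y, G.Adj v y → y = a ∨ y = b ∨ y = c ∨ y = d := by
  have hc : ([a, b, c, d].toFinset).card = 4 := List.toFinset_card_of_nodup hn
  have := all_of (G := G) (v := v) ([a, b, c, d].toFinset) (by omega) (by
    intro w hw
    simp at hw
    rcases hw with rfl | rfl | rfl | rfl <;> assumption)
  intro y hy
  simpa using this y hy

set_option maxHeartbeats 2000000 in
theorem case2 {G : SimpleGraph V} (mn : Mn G) {t1 t2 : V} (hR : Rep G {t1, t2}) 
    (h12 : G.Adj t1 t2) (hd1 : dg G t1 ≤ 4) (hd2 : dg G t2 ≤ 4) : False := by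
  have hR' : Rep G {t2, t1} := by rwa [Finset.pair_comm]
  by_cases hnon : ∃ a b, a ≠ b ∧ ¬ G.Adj a b ∧ G.Adj t1 a ∧ G.Adj t1 b ∧ G.Adj t2 a ∧ G.Adj t2 b
  · obtain ⟨a, b, hab, nab, a1, b1, a2, b2⟩ := hnon
    obtain ⟨a5, q, q1, q2, tq, aq⟩ := c2a mn hR h12 a2.ne' a1
    obtain ⟨-, r, r1, r2, tr, ar⟩ := c2a mn hR' h12.symm a1.ne' a2
    have hqb : q ≠ b := by rintro rfl; exact nab aq
    have hrb : r ≠ b := by rintro rfl; exact nab ar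
    have N1 := nb4 hd1 h12 a1 b1 tq (by have := a2.ne; have := b2.ne; have := aq.ne; grind)
    have N2 := nb4 hd2 h12.symm a2 b2 tr (by have := a1.ne; have := b1.ne; have := ar.ne; grind)
    have bq : G.Adj b q := by
      obtain ⟨-, s, s1, s2, ts, bs⟩ := c2a mn hR h12 b2.ne' b1
      have := N1 s ts
      rcases this with rfl | rfl | rfl | rfl
      · exact absurd rfl s2
      · exact absurd bs.symm nab
      · exact absurd bs (SimpleGraph.irrefl G)
      · exact bs
    have br : G.Adj b r := by
      obtain ⟨-, s, s1, s2, ts, bs⟩ := c2a mn hR' h12.symm b1.ne' b2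
      have := N2 s ts
      rcases this with rfl | rfl | rfl | rfl
      · exact absurd rfl s2
      · exact absurd bs.symm nab
      · exact absurd bs (SimpleGraph.irrefl G)
      · exact bs
    by_cases hqr : q = r
    · subst hqr
      exact c2c mn hR h12 N1 N2 a1 b1 tq a2.ne' b2.ne' r1 bq a5
    · refine mn.nM (cl4 mn.ih1 {t1, t2} {v | v ≠ t1 ∧ v ≠ t2 ∧ v ≠ a ∧ v ≠ b ∧ v ≠ q ∧ v ≠ r} a q b r
        t1 t2 (cn_pair h12) (by simp) (by simp) h12.ne ?_ ?_ ?_ ?_ ?_ hab hqr aq bq.symm br ar.symm)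
      · intro v hv w
        simp at hv
        exact hR.1 v (by simp; tauto) w
      · obtain ⟨y, e1, e2, e3, e4, e5⟩ := out4 (G := G) (v := a) a5.ge t1 t2 q r
        refine ⟨y, ⟨e2, e3, e1.ne', ?_, e4, e5⟩, a, e1.symm⟩
        rintro rfl
        exact nab e1
      · intro v hv w hvw
        simp at hv ⊢
        by_cases hw1 : w = t1
        · subst hw1
          have := N1 v hvw.symm
          tauto
        by_cases hw2 : w = t2
        · subst hw2
          have := N2 v hvw.symm
          tauto
        tauto
      · intro v hv
        simp at hv ⊢
        tauto
      · have := a1.ne'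
        have := a2.ne'
        have := b1.ne'
        have := b2.ne'
        rintro v (rfl | rfl | rfl | rfl)
        · exact ⟨by simp; tauto, by simp, t1, by simp, a1⟩
        · exact ⟨by simp; tauto, by simp, t1, by simp, tq⟩
        · exact ⟨by simp; tauto, by simp, t1, by simp, b1⟩
        · exact ⟨by simp; tauto, by simp, t2, by simp, tr⟩
  · push Not at hnon
    have h3 : 2 < ((nb G t1).filter (fun y => G.Adj t2 y)).card := by
      by_contra hc
      refine conq mn (insert t1 ((nb G t1).filter (fun y => G.Adj t2 y))) hR h12 ?_ ?_ (by simp) 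
        ?_ ?_ ?_ ?_
      · have := Finset.card_insert_le t1 ((nb G t1).filter (fun y => G.Adj t2 y))
        omega
      · simp [h12.ne']
      · simp
      · intro v hv1 hv2 h1 h2
        exfalso
        apply hv1
        simp [mem_nb, h1, h2]
      · intro a ha b hb hab hax hbx
        simp only [Finset.mem_insert, Finset.mem_filter, mem_nb] at ha hb
        by_contra hn
        exact hnon a b hab hn (by tauto) (by tauto) (by tauto) (by tauto)
      · intro b hb hbx
        simp only [Finset.mem_insert, Finset.mem_filter, mem_nb] at hb
        tauto
    obtain ⟨a, b, c, ha, hb, hc, hab, hac, hbc⟩ := Finset.two_lt_card_iff.mp h3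
    simp only [Finset.mem_filter, mem_nb] at ha hb hc
    have hbc' : G.Adj b c := by
      by_contra hn
      exact hnon b c hbc hn hb.1 hc.1 hb.2 hc.2
    have N1 := nb4 hd1 h12 ha.1 hb.1 hc.1 (by 
      have := ha.2.ne; have := hb.2.ne; have := hc.2.ne; grind)
    have N2 := nb4 hd2 h12.symm ha.2 hb.2 hc.2 (by 
      have := ha.1.ne; have := hb.1.ne; have := hc.1.ne; grind)
    exact c2c mn hR h12 N1 N2 ha.1 hb.1 hc.1 ha.2.ne' hb.2.ne' hc.2.ne' hbc' 
      (c2a mn hR h12 ha.2.ne' ha.1).1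

structure TC (G : SimpleGraph V) (t1 t2 t3 : V) : Prop where
  mn : Mn G
  h12 : G.Adj t1 t2
  h13 : G.Adj t1 t3
  h23 : G.Adj t2 t3
  rp : Rep G {t1, t2, t3}
  d1 : dg G t1 ≤ 4
  d2 : dg G t2 ≤ 4
  d3 : dg G t3 ≤ 4

theorem TC.rot {G : SimpleGraph V} {t1 t2 t3 : V} (h : TC G t1 t2 t3) : TC G t2 t3 t1 := by
  refine ⟨h.mn, h.h23, h.h12.symm, h.h13.symm, ?_, h.d2, h.d3, h.d1⟩
  have := h.rp
  have e : ({t2, t3, t1} : Finset V) = {t1, t2, t3} := by ext; simp; tauto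
  rwa [e]

set_option maxHeartbeats 2000000 in
theorem TC.O {G : SimpleGraph V} {t1 t2 t3 : V} (h : TC G t1 t2 t3) :
    ∃ p q, G.Adj p q ∧ dg G p = 5 ∧ dg G q = 5 ∧ p ≠ t2 ∧ p ≠ t3 ∧ q ≠ t2 ∧ q ≠ t3 ∧ 
      ∀ y, G.Adj t1 y ↔ y = t2 ∨ y = t3 ∨ y = p ∨ y = q := by
  obtain ⟨mn, h12, h13, h23, hR, d1, d2, d3⟩ := h
  have h21 := h12.symm
  have h31 := h13.symm
  have h32 := h23.symm
  have hT : Typ G {t1, t2, t3} := Or.inl ⟨Finset.card_le_three, by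
    simp only [Finset.mem_insert, Finset.mem_singleton]
    rintro a (rfl | rfl | rfl) b (rfl | rfl | rfl) hab <;> tauto⟩
  have hp : ∃ p, p ≠ t2 ∧ p ≠ t3 ∧ G.Adj t1 p := by
    by_contra hcon
    push Not at hcon
    refine mn.nM (cl3 mn.ih1 {t1} {v | v ∉ ({t1, t2, t3} : Finset V)} t2 t2 t3 (cn_single G t1) 
      ?_ ?_ ?_ ?_ ?_ ?_ ?_ ?_ ?_ ?_ ⟨t1, rfl, h12⟩ ⟨t1, rfl, h12⟩ ⟨t1, rfl, h13⟩ (Or.inr h23))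
    · intro v hv w
      exact hR.1 v hv w
    · exact hR.2
    · intro v hv w hvw
      by_cases hw : w = t1
      · subst hw
        simp at hv
        exact absurd hvw.symm (hcon v hv.2.1 hv.2.2)
      · simp [hw]
        tauto
    · intro v hv
      simp at hv ⊢
      exact hv.1
    all_goals simp [h12.ne', h13.ne']
  have hlow : ∀ p, p ≠ t2 → p ≠ t3 → G.Adj t1 p → dg G p = 5 := by
    intro p e2 e3 e1
    exact low mn hT hR (t := t1) (by simp) (by simp [e2, e3, e1.ne']) e1
  obtain ⟨p, p2, p3, p1⟩ := hp
  have hq : ∃ q, q ≠ t2 ∧ q ≠ t3 ∧ G.Adj t1 q ∧ G.Adj p q := by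
    by_contra hcon
    push Not at hcon
    refine conq mn {t1, t2, t3} hR p1 Finset.card_le_three (by simp [p2, p3, p1.ne']) 
      (by simp) (fun a ha => Or.inr ha) ?_ ?_ ?_
    · intro v hv _ h1 h2
      simp at hv
      exact absurd h2 (hcon v hv.2.1 hv.2.2 h1)
    · simp only [Finset.mem_insert, Finset.mem_singleton]
      rintro a (rfl | rfl | rfl) b (rfl | rfl | rfl) hab <;> tauto
    · simp only [Finset.mem_insert, Finset.mem_singleton]
      rintro a (rfl | rfl | rfl) <;> tauto
  obtain ⟨q, q2, q3, q1, pq⟩ := hq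
  refine ⟨p, q, pq, hlow p p2 p3 p1, hlow q q2 q3 q1, p2, p3, q2, q3, ?_⟩
  intro y
  constructor
  · refine nb4 d1 h12 h13 p1 q1 ?_ y
    have := pq.ne
    have := h23.ne
    grind
  · rintro (rfl | rfl | rfl | rfl) <;> assumption

theorem TC.O1 {G : SimpleGraph V} {t1 t2 t3 p : V} (h : TC G t1 t2 t3) (h1 : G.Adj t1 p) 
    (h2 : p ≠ t2) (h3 : p ≠ t3) :
    ∃ q, G.Adj p q ∧ dg G p = 5 ∧ dg G q = 5 ∧ q ≠ t2 ∧ q ≠ t3 ∧ 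
      ∀ y, G.Adj t1 y ↔ y = t2 ∨ y = t3 ∨ y = p ∨ y = q := by
  obtain ⟨a, b, hab, a5, b5, a2, a3, b2, b3, hN⟩ := h.O
  have := (hN p).mp h1
  rcases this with rfl | rfl | rfl | rfl
  · exact absurd rfl h2
  · exact absurd rfl h3
  · exact ⟨b, hab, a5, b5, b2, b3, hN⟩
  · refine ⟨a, hab.symm, b5, a5, a2, a3, ?_⟩
    intro y
    rw [hN]
    tauto

theorem TC.common {G : SimpleGraph V} {t1 t2 t3 : V} (h : TC G t1 t2 t3) :
    ∃ p, p ≠ t3 ∧ G.Adj t1 p ∧ G.Adj t2 p := by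
  obtain ⟨mn, h12, h13, h23, hR, d1, d2, d3⟩ := h
  by_contra hcon
  push Not at hcon
  refine conq mn {t1, t3} hR h12 (Finset.card_le_two.trans (by simp)) (by simp [h12.ne', h23.ne])
    (by simp) ?_ ?_ ?_ ?_
  · simp
  · intro v hv _ h1 h2
    simp at hv
    exact absurd h2 (hcon v hv.2 h1)
  · simp only [Finset.mem_insert, Finset.mem_singleton]
    rintro a (rfl | rfl) b (rfl | rfl) hab <;> tauto
  · simp only [Finset.mem_insert, Finset.mem_singleton]
    rintro a (rfl | rfl) <;> tauto

set_option maxHeartbeats 2000000 in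
theorem TC.fin {G : SimpleGraph V} {t1 t2 t3 : V} (h : TC G t1 t2 t3) (a b c : V)
    (hbc : G.Adj b c) (ha : G.Adj t1 a ∨ G.Adj t2 a ∨ G.Adj t3 a)
    (hb : G.Adj t1 b ∨ G.Adj t2 b ∨ G.Adj t3 b) (hc : G.Adj t1 c ∨ G.Adj t2 c ∨ G.Adj t3 c)
    (haK : a ≠ t1 ∧ a ≠ t2 ∧ a ≠ t3) (hbK : b ≠ t1 ∧ b ≠ t2 ∧ b ≠ t3) 
    (hcK : c ≠ t1 ∧ c ≠ t2 ∧ c ≠ t3)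
    (h1 : ∀ y, G.Adj t1 y → y = t2 ∨ y = t3 ∨ y = a ∨ y = b ∨ y = c)
    (h2 : ∀ y, G.Adj t2 y → y = t1 ∨ y = t3 ∨ y = a ∨ y = b ∨ y = c)
    (h3 : ∀ y, G.Adj t3 y → y = t1 ∨ y = t2 ∨ y = a ∨ y = b ∨ y = c)
    (hex : ∃ w v, G.Adj w v ∧ v ≠ t1 ∧ v ≠ t2 ∧ v ≠ t3 ∧ v ≠ a ∧ v ≠ b ∧ v ≠ c) : False := by
  obtain ⟨mn, h12, h13, h23, hR, d1, d2, d3⟩ := h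
  have key : ∀ a, G.Adj t1 a ∨ G.Adj t2 a ∨ G.Adj t3 a → ∃ f ∈ ({t1, t2, t3} : Set V), G.Adj f a := by
    rintro a (h | h | h)
    · exact ⟨t1, by simp, h⟩
    · exact ⟨t2, by simp, h⟩
    · exact ⟨t3, by simp, h⟩
  have ea := key a ha
  have eb := key b hb
  have ec := key c hc
  clear key ha hb hc
  refine mn.nM (cl3 mn.ih1 {t1, t2, t3} 
    {v | v ≠ t1 ∧ v ≠ t2 ∧ v ≠ t3 ∧ v ≠ a ∧ v ≠ b ∧ v ≠ c} a b c 
    (cn_insert (cn_pair h23) (b := t2) (by simp) h12) ?_ ?_ ?_ ?_ ?_ ?_ ?_ ?_ ?_ ?_ ea eb ec (Or.inr hbc))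
  · intro v hv w
    simp at hv
    exact hR.1 v (by simp; tauto) w
  · obtain ⟨w, v, hwv, hv⟩ := hex
    exact ⟨v, hv, w, hwv.symm⟩
  · clear hex haK hbK hcK ea eb ec hR
    intro v hv w hvw
    simp at hv ⊢
    by_cases hw1 : w = t1
    · subst hw1
      have := h1 v hvw.symm
      tauto
    by_cases hw2 : w = t2
    · subst hw2
      have := h2 v hvw.symm
      tauto
    by_cases hw3 : w = t3
    · subst hw3
      have := h3 v hvw.symm
      tauto
    tauto
  · intro v hv
    simp at hv ⊢
    tauto
  · simpa using haK
  · simpa using hbK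
  · simpa using hcK
  all_goals simp

theorem TC.ex {G : SimpleGraph V} {p t1 t2 t3 a b c : V} (h5 : dg G p = 5) 
    (h : ∃ s1 s2 s3 s4, ∀ y, y = t1 ∨ y = t2 ∨ y = t3 ∨ y = a ∨ y = b ∨ y = c → G.Adj p y → 
      y = s1 ∨ y = s2 ∨ y = s3 ∨ y = s4) :
    ∃ w v, G.Adj w v ∧ v ≠ t1 ∧ v ≠ t2 ∧ v ≠ t3 ∧ v ≠ a ∧ v ≠ b ∧ v ≠ c := by
  obtain ⟨s1, s2, s3, s4, h⟩ := h
  obtain ⟨y, e1, e2, e3, e4, e5⟩ := out4 (G := G) (v := p) h5.ge s1 s2 s3 s4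
  refine ⟨p, y, e1, ?_⟩
  have := h y
  tauto

set_option maxHeartbeats 2000000 in
theorem TC.star {G : SimpleGraph V} {t1 t2 t3 p : V} (h : TC G t1 t2 t3) (p1 : G.Adj t1 p)
    (p2 : G.Adj t2 p) (p3 : G.Adj t3 p) : False := by
  have n1 := p1.ne'
  have n2 := p2.ne'
  have n3 := p3.ne'
  obtain ⟨q, pq, p5, q5, q2, q3, N1⟩ := h.O1 p1 n2 n3
  obtain ⟨r, pr, -, r5, r3, r1, N2⟩ := h.rot.O1 p2 n3 n1
  obtain ⟨s, ps, -, s5, s1, s2, N3⟩ := h.rot.rot.O1 p3 n1 n2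
  have h12 := h.h12.ne
  have h13 := h.h13.ne
  have h23 := h.h23.ne
  have eq := (N1 q).mpr (by simp)
  have er := (N2 r).mpr (by simp)
  have es := (N3 s).mpr (by simp)
  have q1 := eq.ne'
  have r2 := er.ne'
  have s3 := es.ne'
  have key : ∃ b c, G.Adj p b ∧ (q = b ∨ q = c) ∧ (r = b ∨ r = c) ∧ (s = b ∨ s = c) ∧
      (b = q ∨ b = r ∨ b = s) ∧ (c = q ∨ c = r ∨ c = s) := by
    by_cases h1 : q = r
    · exact ⟨q, s, pq, Or.inl rfl, Or.inl h1.symm, Or.inr rfl, Or.inl rfl, Or.inr (Or.inr rfl)⟩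
    by_cases h2 : q = s
    · exact ⟨q, r, pq, Or.inl rfl, Or.inr rfl, Or.inl h2.symm, Or.inl rfl, Or.inr (Or.inl rfl)⟩
    by_cases h3 : r = s
    · exact ⟨q, s, pq, Or.inl rfl, Or.inr h3, Or.inr rfl, Or.inl rfl, Or.inr (Or.inr rfl)⟩
    exfalso
    have := le_dg (G := G) (v := p) ([t1, t2, t3, q, r, s].toFinset) (by
      intro w hw
      simp at hw
      rcases hw with rfl | rfl | rfl | rfl | rfl | rfl
      exacts [p1.symm, p2.symm, p3.symm, pq, pr, ps])
    rw [List.toFinset_card_of_nodup (by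
      simp [h12, h13, h23, Ne.symm q1, Ne.symm q2, Ne.symm q3, Ne.symm r1, Ne.symm r2, Ne.symm r3,
        Ne.symm s1, Ne.symm s2, Ne.symm s3, h1, h2, h3])] at this
    simp at this
    omega
  obtain ⟨b, c, hpb, kq, kr, ks, kb, kc⟩ := key
  have hc : G.Adj p c := by rcases kc with rfl | rfl | rfl <;> assumption
  have at_b : ∀ b, (b = q ∨ b = r ∨ b = s) → (G.Adj t1 b ∨ G.Adj t2 b ∨ G.Adj t3 b) ∧ 
      (b ≠ t1 ∧ b ≠ t2 ∧ b ≠ t3) ∧ dg G b = 5 := by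
    rintro b (rfl | rfl | rfl)
    · exact ⟨Or.inl eq, ⟨q1, q2, q3⟩, q5⟩
    · exact ⟨Or.inr (Or.inl er), ⟨r1, r2, r3⟩, r5⟩
    · exact ⟨Or.inr (Or.inr es), ⟨s1, s2, s3⟩, s5⟩
  refine h.fin c p b hpb (at_b c kc).1 (Or.inl p1) (at_b b kb).1 (at_b c kc).2.1 ⟨n1, n2, n3⟩
    (at_b b kb).2.1 ?_ ?_ ?_ ?_
  · intro y hy
    rcases (N1 y).mp hy with h | h | h | h
    · simp [h]
    · simp [h]
    · simp [h]
    · rcases kq with k | k <;> simp [h, k]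
  · intro y hy
    rcases (N2 y).mp hy with h | h | h | h
    · simp [h]
    · simp [h]
    · simp [h]
    · rcases kr with k | k <;> simp [h, k]
  · intro y hy
    rcases (N3 y).mp hy with h | h | h | h
    · simp [h]
    · simp [h]
    · simp [h]
    · rcases ks with k | k <;> simp [h, k]
  · by_cases hbc : b = c
    · refine TC.ex p5 ⟨t1, t2, t3, b, ?_⟩
      rintro y (h | h | h | h | h | h) hpy
      · simp [h]
      · simp [h]
      · simp [h]
      · simp [h, hbc]
      · exact absurd h.symm hpy.ne
      · simp [h]
    · have hb5 := (at_b b kb).2.2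
      have hc5 := (at_b c kc).2.2
      have : ¬ G.Adj t1 b ∨ ¬ G.Adj t2 b ∨ ¬ G.Adj t3 b := by
        by_contra hcon
        push Not at hcon
        obtain ⟨k1, k2, k3⟩ := hcon
        have hbK := (at_b b kb).2.1
        have hcK := (at_b c kc).2.1
        have e1 := (N1 b).mp k1
        have e2 := (N2 b).mp k2
        have e3 := (N3 b).mp k3
        have := hpb.ne'
        grind
      rcases this with k | k | k
      · refine TC.ex hb5 ⟨t2, t3, p, c, ?_⟩
        rintro y (h | h | h | h | h | h) hpy
        · exact absurd (h ▸ hpy.symm) k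
        · simp [h]
        · simp [h]
        · simp [h]
        · simp [h]
        · exact absurd h.symm hpy.ne
      · refine TC.ex hb5 ⟨t1, t3, p, c, ?_⟩
        rintro y (h | h | h | h | h | h) hpy
        · simp [h]
        · exact absurd (h ▸ hpy.symm) k
        · simp [h]
        · simp [h]
        · simp [h]
        · exact absurd h.symm hpy.ne
      · refine TC.ex hb5 ⟨t1, t2, p, c, ?_⟩
        rintro y (h | h | h | h | h | h) hpy
        · simp [h]
        · simp [h]
        · exact absurd (h ▸ hpy.symm) k
        · simp [h]
        · simp [h]
        · exact absurd h.symm hpy.ne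

set_option maxHeartbeats 2000000 in
theorem TC.false {G : SimpleGraph V} {t1 t2 t3 : V} (h : TC G t1 t2 t3) : False := by
  obtain ⟨a, a3, ha1, ha2⟩ := h.common
  obtain ⟨b, b1, hb2, hb3⟩ := h.rot.common
  obtain ⟨c, c2, hc3, hc1⟩ := h.rot.rot.common
  have a1 := ha1.ne'
  have a2 := ha2.ne'
  have b2 := hb2.ne'
  have b3 := hb3.ne'
  have c1 := hc1.ne'
  have c3 := hc3.ne'
  have na3 : ¬ G.Adj t3 a := fun h3 => h.star ha1 ha2 h3
  have nb1 : ¬ G.Adj t1 b := fun h3 => h.star h3 hb2 hb3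
  have nc2 : ¬ G.Adj t2 c := fun h3 => h.star hc1 h3 hc3
  have hac : a ≠ c := by rintro rfl; exact na3 hc3
  have hab : a ≠ b := by rintro rfl; exact na3 hb3
  have hbc : b ≠ c := by rintro rfl; exact nb1 hc1
  obtain ⟨q, aq, a5, q5, q2, q3, N1⟩ := h.O1 ha1 a2 a3
  obtain ⟨r, br, b5, r5, r3, r1, N2⟩ := h.rot.O1 hb2 b3 b1
  obtain ⟨s, cs, c5, s5, s1, s2, N3⟩ := h.rot.rot.O1 hc3 c1 c2
  have : q = c := by have := (N1 c).mp hc1; grind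
  subst q
  have : r = a := by have := (N2 a).mp ha2; grind
  subst r
  have : s = b := by have := (N3 b).mp hb3; grind
  subst s
  refine h.fin a b c cs.symm (Or.inl ha1) (Or.inr (Or.inl hb2)) (Or.inl hc1) ⟨a1, a2, a3⟩
    ⟨b1, b2, b3⟩ ⟨c1, c2, c3⟩ ?_ ?_ ?_ ?_
  · intro y hy
    rcases (N1 y).mp hy with h | h | h | h <;> simp [h]
  · intro y hy
    rcases (N2 y).mp hy with h | h | h | h <;> simp [h]
  · intro y hy
    rcases (N3 y).mp hy with h | h | h | h <;> simp [h]
  · refine TC.ex a5 ⟨t1, t2, b, c, ?_⟩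
    rintro y (h | h | h | h | h | h) hpy
    · simp [h]
    · simp [h]
    · exact absurd (h ▸ hpy.symm) na3
    · exact absurd h.symm hpy.ne
    · simp [h]
    · simp [h]

end IcoMinor

namespace IcoMinor

set_option linter.unusedSectionVars false

open Finset

variable {V : Type*} [Fintype V]

theorem comp_ex (G : SimpleGraph V) (X : Set V) (r : V) (hr : r ∉ X) :
    ∃ D : Set V, r ∈ D ∧ Cn G D ∧ (∀ v ∈ D, v ∉ X) ∧
      ∀ v ∈ D, ∀ w, G.Adj v w → w ∈ D ∨ w ∈ X := by
  refine ⟨{v | ∃ S : Set V, Cn G S ∧ r ∈ S ∧ v ∈ S ∧ ∀ y ∈ S, y ∉ X}, ?_, ?_, ?_, ?_⟩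
  · refine ⟨{r}, cn_single G r, rfl, rfl, ?_⟩
    rintro y rfl
    exact hr
  · refine ⟨⟨r, {r}, cn_single G r, rfl, rfl, ?_⟩, ?_⟩
    · rintro y rfl
      exact hr
    · rintro T ⟨a, ⟨S, hS, hrS, haS, hSX⟩, haT⟩ hcl b ⟨S', hS', hrS', hbS', hSX'⟩
      have h1 : r ∈ T := hS.2 T ⟨a, haS, haT⟩ (fun p hp q hq => 
        hcl p ⟨S, hS, hrS, hp, hSX⟩ q ⟨S, hS, hrS, hq, hSX⟩) r hrS
      exact hS'.2 T ⟨r, hrS', h1⟩ (fun p hp q hq => 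
        hcl p ⟨S', hS', hrS', hp, hSX'⟩ q ⟨S', hS', hrS', hq, hSX'⟩) b hbS'
  · rintro v ⟨S, hS, hrS, hvS, hSX⟩
    exact hSX v hvS
  · rintro v ⟨S, hS, hrS, hvS, hSX⟩ w hvw
    by_cases hw : w ∈ X
    · exact Or.inr hw
    · refine Or.inl ⟨insert w S, cn_insert hS hvS hvw.symm, Or.inr hrS, Or.inl rfl, ?_⟩
      rintro y (rfl | hy)
      · exact hw
      · exact hSX y hy

/-- `K6minus` as a subgraph, missing edge `a b`. -/
theorem k6_0 {G : SimpleGraph V} {a b c d e f : V} (hab : a ≠ b)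
    (hac : G.Adj a c) (had : G.Adj a d) (hae : G.Adj a e) (haf : G.Adj a f) (hbc : G.Adj b c)
    (hbd : G.Adj b d) (hbe : G.Adj b e) (hbf : G.Adj b f) (hcd : G.Adj c d) (hce : G.Adj c e) 
    (hcf : G.Adj c f) (hde : G.Adj d e) (hdf : G.Adj d f) (hef : G.Adj e f) : M G :=
  k6_of (cn_single G a) (cn_single G b) (cn_single G c) (cn_single G d) (cn_single G e)
    (cn_single G f) (sing_disj hab) (sing_disj hac.ne) (sing_disj had.ne) (sing_disj hae.ne)
    (sing_disj haf.ne) (sing_disj hbc.ne) (sing_disj hbd.ne) (sing_disj hbe.ne)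
    (sing_disj hbf.ne) (sing_disj hcd.ne) (sing_disj hce.ne) (sing_disj hcf.ne) (sing_disj hde.ne)
    (sing_disj hdf.ne) (sing_disj hef.ne)
    (sing_E hac) (sing_E had) (sing_E hae) (sing_E haf) (sing_E hbc) (sing_E hbd) (sing_E hbe)
    (sing_E hbf) (sing_E hcd) (sing_E hce) (sing_E hcf) (sing_E hde) (sing_E hdf) (sing_E hef)

structure Z (G : SimpleGraph V) : Prop where
  mn : Mn G
  rp : Rep G ∅

theorem Z.d5 {G : SimpleGraph V} (z : Z G) {v w : V} (h : G.Adj v w) : 5 ≤ dg G v :=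
  z.rp.1 v (by simp) w h

theorem Z.low_ex {G : SimpleGraph V} (z : Z G) : ∃ u, dg G u = 5 := by
  by_contra hcon
  push Not at hcon
  obtain ⟨v, -, w, hvw⟩ := z.rp.2
  refine del z.mn z.rp hvw (Or.inr ?_) (Or.inr ?_) (Or.inl ⟨by simp, by simp⟩)
  · have := hcon v
    have := z.d5 hvw
    omega
  · have := hcon w
    have := z.d5 hvw.symm
    omega

theorem Z.A {G : SimpleGraph V} (z : Z G) {u h : V} (huh : G.Adj u h) :
    (∃ a b, a ≠ b ∧ ¬ G.Adj a b ∧ dg G a = 5 ∧ dg G b = 5 ∧ G.Adj u a ∧ G.Adj u b ∧ G.Adj h a ∧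
      G.Adj h b) ∨ ∃ a b c, G.Adj a b ∧ G.Adj a c ∧ G.Adj b c ∧ G.Adj u a ∧ G.Adj u b ∧
        G.Adj u c ∧ G.Adj h a ∧ G.Adj h b ∧ G.Adj h c := by
  by_contra hcon
  rw [not_or] at hcon
  obtain ⟨h1, h2⟩ := hcon
  push Not at h1 h2
  have hadj : ∀ a b, a ≠ b → G.Adj u a ∧ G.Adj h a ∧ dg G a = 5 → 
      G.Adj u b ∧ G.Adj h b ∧ dg G b = 5 → G.Adj a b := by
    intro a b hab ⟨a1, a2, a3⟩ ⟨b1, b2, b3⟩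
    by_contra hn
    exact h1 a b hab hn a3 b3 a1 b1 a2 b2
  have hm : ∀ v, v ∈ univ.filter (fun y => G.Adj u y ∧ G.Adj h y ∧ dg G y = 5) ↔ 
    G.Adj u v ∧ G.Adj h v ∧ dg G v = 5 := by simp
  set L := univ.filter (fun y => G.Adj u y ∧ G.Adj h y ∧ dg G y = 5) with hL
  refine conq z.mn (insert u L) z.rp huh ?_ ?_ (by simp) (by simp) ?_ ?_ ?_
  · by_contra hc
    have := Finset.card_insert_le u L
    have h3 : 2 < L.card := by omega
    obtain ⟨a, b, c, ha, hb, hc, hab, hac, hbc⟩ := Finset.two_lt_card_iff.mp h3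
    rw [hm] at ha hb hc
    exact h2 a b c (hadj a b hab ha hb) (hadj a c hac ha hc) (hadj b c hbc hb hc) ha.1 hb.1 hc.1
      ha.2.1 hb.2.1 hc.2.1
  · rw [Finset.mem_insert, hm]
    rintro (h | h)
    · exact huh.ne' h
    · exact h.2.1.ne rfl
  · intro v hv _ hu hh
    rw [Finset.mem_insert, hm, not_or] at hv
    have := z.d5 hu.symm
    have : dg G v ≠ 5 := fun h => hv.2 ⟨hu, hh, h⟩
    omega
  · intro a ha b hb hab hau hbu
    rw [Finset.mem_insert, hm] at ha hb
    exact hadj a b hab (ha.resolve_left hau) (hb.resolve_left hbu)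
  · intro b hb hbu
    rw [Finset.mem_insert, hm] at hb
    exact Or.inl (hb.resolve_left hbu).1

set_option maxHeartbeats 2000000 in
theorem Z.K4 {G : SimpleGraph V} (z : Z G) {u h a b c : V} (hu : dg G u = 5) 
    (uh : G.Adj u h) (ua : G.Adj u a) (ub : G.Adj u b) (uc : G.Adj u c) (ha : G.Adj h a)
    (hb : G.Adj h b) (hc : G.Adj h c) (ab : G.Adj a b) (ac : G.Adj a c) (bc : G.Adj b c) :
    False := by
  obtain ⟨e, ue, eh, ea, eb, ec⟩ := out4 (G := G) (v := u) hu.ge h a b c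
  have N := full5 hu.le uh ua ub uc ue (by
    simp [ha.ne, hb.ne, hc.ne, ab.ne, ac.ne, bc.ne, eh.symm, ea.symm, eb.symm, ec.symm])
  have key : ∀ p q, p ≠ q → ¬ G.Adj p q → G.Adj u p → G.Adj u q → G.Adj e p → G.Adj e q → False := by
    intro p q hpq npq up uq ep eq
    rcases (N p).mp up with rfl | rfl | rfl | rfl | rfl <;> 
    rcases (N q).mp uq with rfl | rfl | rfl | rfl | rfl <;> 
    first
      | exact hpq rfl
      | exact npq (by assumption)
      | exact npq (SimpleGraph.Adj.symm (by assumption))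
      | exact ep.ne rfl
      | exact eq.ne rfl
  have k3 : ∀ x p q r, u ≠ x → (e ≠ x) → G.Adj u x → G.Adj x p → G.Adj x q → G.Adj x r → 
      G.Adj p q → G.Adj p r → G.Adj q r → G.Adj u p → G.Adj u q → G.Adj u r → G.Adj e p → 
      G.Adj e q → G.Adj e r → False := by
    intro x p q r _ h1 ux xp xq xr pq pr qr up uq ur ep eq er
    exact z.mn.nM (k6_0 (a := e) (b := x) (c := u) (d := p) (e := q) (f := r) h1 ue.symm ep eq er
      ux.symm xp xq xr up uq ur pq pr qr)
  have two : ∀ p q, (∀ v, G.Adj u v → G.Adj e v → v = p ∨ v = q) → False := by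
    intro p q hpq
    rcases z.A ue with ⟨s, t, hst, nst, -, -, us, ut, es, et⟩ | ⟨s, t, r, st, sr, tr, us, ut, ur, es, et, er⟩
    · exact key s t hst nst us ut es et
    · have h1 := hpq s us es
      have h2 := hpq t ut et
      have h3 := hpq r ur er
      have := st.ne
      have := sr.ne
      have := tr.ne
      grind
  have hin : ∀ v, G.Adj u v → G.Adj e v → v = h ∨ v = a ∨ v = b ∨ v = c := by
    intro v h1 h2
    rcases (N v).mp h1 with h | h | h | h | h
    · exact Or.inl h
    · exact Or.inr (Or.inl h)
    · exact Or.inr (Or.inr (Or.inl h))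
    · exact Or.inr (Or.inr (Or.inr h))
    · exact absurd h.symm h2.ne
  by_cases e1 : G.Adj e h <;> by_cases e2 : G.Adj e a <;> by_cases e3 : G.Adj e b <;> 
    by_cases e4 : G.Adj e c
  · exact k3 h a b c uh.ne eh uh ha hb hc ab ac bc ua ub uc e2 e3 e4
  · exact k3 c h a b uc.ne ec uc hc.symm ac.symm bc.symm ha hb ab uh ua ub e1 e2 e3
  · exact k3 b h a c ub.ne eb ub hb.symm ab.symm bc ha hc ac uh ua uc e1 e2 e4
  · exact two h a (fun v h1 h2 => by
      rcases hin v h1 h2 with h | h | h | h <;> first | (simp [h]; done) | (subst h; contradiction))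
  · exact k3 a h b c ua.ne ea ua ha.symm ab ac hb hc bc uh ub uc e1 e3 e4
  · exact two h b (fun v h1 h2 => by
      rcases hin v h1 h2 with h | h | h | h <;> first | (simp [h]; done) | (subst h; contradiction))
  · exact two h c (fun v h1 h2 => by
      rcases hin v h1 h2 with h | h | h | h <;> first | (simp [h]; done) | (subst h; contradiction))
  · exact two h h (fun v h1 h2 => by
      rcases hin v h1 h2 with h | h | h | h <;> first | (simp [h]; done) | (subst h; contradiction))
  · exact k3 h a b c uh.ne eh uh ha hb hc ab ac bc ua ub uc e2 e3 e4
  · exact two a b (fun v h1 h2 => by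
      rcases hin v h1 h2 with h | h | h | h <;> first | (simp [h]; done) | (subst h; contradiction))
  · exact two a c (fun v h1 h2 => by
      rcases hin v h1 h2 with h | h | h | h <;> first | (simp [h]; done) | (subst h; contradiction))
  · exact two a a (fun v h1 h2 => by
      rcases hin v h1 h2 with h | h | h | h <;> first | (simp [h]; done) | (subst h; contradiction))
  · exact two b c (fun v h1 h2 => by
      rcases hin v h1 h2 with h | h | h | h <;> first | (simp [h]; done) | (subst h; contradiction))
  · exact two b b (fun v h1 h2 => by
      rcases hin v h1 h2 with h | h | h | h <;> first | (simp [h]; done) | (subst h; contradiction))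
  · exact two c c (fun v h1 h2 => by
      rcases hin v h1 h2 with h | h | h | h <;> first | (simp [h]; done) | (subst h; contradiction))
  · exact two c c (fun v h1 h2 => by
      rcases hin v h1 h2 with h | h | h | h <;> first | (simp [h]; done) | (subst h; contradiction))

theorem Z.B {G : SimpleGraph V} (z : Z G) {u h : V} (hu : dg G u = 5) (uh : G.Adj u h) :
    ∃ a b, a ≠ b ∧ ¬ G.Adj a b ∧ dg G a = 5 ∧ dg G b = 5 ∧ G.Adj u a ∧ G.Adj u b ∧ G.Adj h a ∧
      G.Adj h b := by
  rcases z.A uh with h1 | ⟨a, b, c, ab, ac, bc, ua, ub, uc, ha, hb, hc⟩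
  · exact h1
  · exact (z.K4 hu uh ua ub uc ha hb hc ab ac bc).elim

/-- the neighbourhood of `u` contains `K_{2,3}` plus an edge on the larger side -/
structure ZQ (G : SimpleGraph V) (u a b c d e : V) : Prop where
  z : Z G
  N : ∀ y, G.Adj u y ↔ y = a ∨ y = b ∨ y = c ∨ y = d ∨ y = e
  ab : a ≠ b
  ac : G.Adj a c
  ad : G.Adj a d
  ae : G.Adj a e
  bc : G.Adj b c
  bd : G.Adj b d
  be : G.Adj b e
  cd : G.Adj c d
  ce : c ≠ e
  de : d ≠ e

theorem ZQ.swap {G : SimpleGraph V} {u a b c d e : V} (q : ZQ G u a b c d e) : 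
    ZQ G u b a c d e := by
  obtain ⟨z, N, ab, ac, ad, ae, bc, bd, be, cd, ce, de⟩ := q
  exact ⟨z, fun y => by rw [N, or_left_comm], ab.symm, bc, bd, be, ac, ad, ae, cd, ce, de⟩

theorem ZQ.swap' {G : SimpleGraph V} {u a b c d e : V} (q : ZQ G u a b c d e) : 
    ZQ G u a b d c e := by
  obtain ⟨z, N, ab, ac, ad, ae, bc, bd, be, cd, ce, de⟩ := q
  exact ⟨z, fun y => by rw [N, or_left_comm (a := y = d)], ab, ad, ac, ae, bd, bc, be, cd.symm, de, ce⟩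

theorem ZQ.adj {G : SimpleGraph V} {u a b c d e : V} (q : ZQ G u a b c d e) : 
    G.Adj u a ∧ G.Adj u b ∧ G.Adj u c ∧ G.Adj u d ∧ G.Adj u e :=
  ⟨(q.N a).mpr (by simp), (q.N b).mpr (by simp), (q.N c).mpr (by simp), (q.N d).mpr (by simp),
    (q.N e).mpr (by simp)⟩

theorem ZQ.one {G : SimpleGraph V} {u a b c d e : V} (q : ZQ G u a b c d e) (D : Set V)
    (hD : Cn G D) (hX : ∀ v ∈ D, v ≠ u ∧ ¬ G.Adj u v) (ha : E G D {a}) (hc : E G D {c})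
    (hd : E G D {d}) (hbe : E G D {b, e}) : False := by
  obtain ⟨ua, ub, uc, ud, ue⟩ := q.adj
  have hds : ∀ v, G.Adj u v → Disjoint D {v} := by
    intro v hv
    rw [Set.disjoint_singleton_right]
    exact fun h => (hX v h).2 hv
  refine q.z.mn.nM (k6_of (A := {u}) (B := D) (C := {b, e}) (D := {a}) (F := {c}) (H := {d})
    (cn_single G u) hD (cn_pair q.be) (cn_single G a) (cn_single G c) (cn_single G d) ?_ ?_
    (sing_disj ua.ne) (sing_disj uc.ne) (sing_disj ud.ne) ?_ (hds a ua) (hds c uc) (hds d ud)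
    ?_ ?_ ?_ (sing_disj q.ac.ne) (sing_disj q.ad.ne) (sing_disj q.cd.ne)
    ⟨u, rfl, b, by simp, ub⟩ (sing_E ua) (sing_E uc) (sing_E ud) hbe ha hc hd
    ⟨e, by simp, a, rfl, q.ae.symm⟩ ⟨b, by simp, c, rfl, q.bc⟩ ⟨b, by simp, d, rfl, q.bd⟩
    (sing_E q.ac) (sing_E q.ad) (sing_E q.cd))
  · rw [Set.disjoint_singleton_left]
    exact fun h => (hX u h).1 rfl
  · simp [ub.ne, ue.ne]
  · rw [Set.disjoint_left]
    rintro v hv (rfl | rfl)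
    · exact (hX _ hv).2 ub
    · exact (hX _ hv).2 ue
  · simp [q.ab, q.ae.ne]
  · simp [q.bc.ne', q.ce]
  · simp [q.bd.ne', q.de]

theorem ZQ.four {G : SimpleGraph V} {u a b c d e : V} (q : ZQ G u a b c d e) (D : Set V)
    (hX : ∀ v ∈ D, v ≠ u ∧ ¬ G.Adj u v) (hn : ∃ v ∈ D, ∃ w, G.Adj v w)
    (hN : ∀ v ∈ D, ∀ w, G.Adj v w → w ∈ D ∨ G.Adj u w) (hd : ¬ E G D {d}) : False := by
  obtain ⟨ua, ub, uc, ud, ue⟩ := q.adj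
  refine q.z.mn.nM (cl4 q.z.mn.ih1 {u, d} D a c b e u d (cn_pair ud) (by simp) (by simp) ud.ne
    (fun v _ w h => q.z.d5 h) hn ?_ ?_ ?_ q.ab q.ce q.ac q.bc.symm q.be q.ae.symm)
  · intro v hv w hvw
    rcases hN v hv w hvw with h | h
    · exact Or.inl h
    · rcases (q.N w).mp h with h | h | h | h | h
      · simp [h]
      · simp [h]
      · simp [h]
      · subst h
        exact absurd ⟨v, hv, w, rfl, hvw⟩ hd
      · simp [h]
  · rintro v hv (rfl | rfl)
    · exact (hX _ hv).1 rfl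
    · exact (hX _ hv).2 ud
  · rintro v (rfl | rfl | rfl | rfl)
    · exact ⟨by simp [ua.ne', q.ad.ne], fun h => (hX _ h).2 ua, u, by simp, ua⟩
    · exact ⟨by simp [uc.ne', q.cd.ne], fun h => (hX _ h).2 uc, u, by simp, uc⟩
    · exact ⟨by simp [ub.ne', q.bd.ne], fun h => (hX _ h).2 ub, u, by simp, ub⟩
    · exact ⟨by simp [ue.ne', q.de.symm], fun h => (hX _ h).2 ue, u, by simp, ue⟩

theorem ZQ.three {G : SimpleGraph V} {u a b c d e : V} (q : ZQ G u a b c d e) (D : Set V)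
    (hX : ∀ v ∈ D, v ≠ u ∧ ¬ G.Adj u v) (hn : ∃ v ∈ D, ∃ w, G.Adj v w) (x : V) (hx : G.Adj u x)
    (hN : ∀ v ∈ D, ∀ w, G.Adj v w → w ∈ D ∨ w = x ∨ w = c ∨ w = d) : False := by
  obtain ⟨ua, ub, uc, ud, ue⟩ := q.adj
  refine q.z.mn.nM (cl3 q.z.mn.ih1 {u} D x c d (cn_single G u) 
    (fun v _ w h => q.z.d5 h) hn hN ?_ ?_ ?_ ?_ ?_ ?_ ?_ ⟨u, rfl, hx⟩ ⟨u, rfl, uc⟩ ⟨u, rfl, ud⟩ 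
    (Or.inr q.cd))
  · rintro v hv rfl
    exact (hX _ hv).1 rfl
  · simp [hx.ne']
  · simp [uc.ne']
  · simp [ud.ne']
  · exact fun h => (hX _ h).2 hx
  · exact fun h => (hX _ h).2 uc
  · exact fun h => (hX _ h).2 ud

theorem ZQ.false {G : SimpleGraph V} {u a b c d e : V} (q : ZQ G u a b c d e) : False := by
  obtain ⟨ua, ub, uc, ud, ue⟩ := q.adj
  by_cases hr : ∃ v r, G.Adj u v ∧ G.Adj v r ∧ r ≠ u ∧ ¬ G.Adj u r
  · obtain ⟨v, r, uv, vr, r1, r2⟩ := hr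
    obtain ⟨D, rD, hD, hX, hN⟩ := comp_ex G {y | y = u ∨ G.Adj u y} r (by
      rintro (h | h)
      · exact r1 h
      · exact r2 h)
    have hX' : ∀ v ∈ D, v ≠ u ∧ ¬ G.Adj u v := by
      intro v hv
      have := hX v hv
      exact ⟨fun h => this (Or.inl h), fun h => this (Or.inr h)⟩
    have hN' : ∀ v ∈ D, ∀ w, G.Adj v w → w ∈ D ∨ G.Adj u w := by
      intro v hv w hvw
      rcases hN v hv w hvw with h | h | h
      · exact Or.inl h
      · subst h
        exact absurd hvw.symm (hX' v hv).2
      · exact Or.inr h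
    have hn : ∃ v ∈ D, ∃ w, G.Adj v w := ⟨r, rD, v, vr.symm⟩
    have hd : E G D {d} := by
      by_contra h
      exact q.four D hX' hn hN' h
    have hc : E G D {c} := by
      by_contra h
      exact q.swap'.four D hX' hn hN' h
    have hmem : ∀ v ∈ D, ∀ w, G.Adj v w → w ∈ D ∨ (w = a ∧ E G D {a}) ∨ (w = b ∧ E G D {b}) ∨ 
        w = c ∨ w = d ∨ (w = e ∧ E G D {e}) := by
      intro v hv w hvw
      rcases hN' v hv w hvw with h | h
      · exact Or.inl h
      · rcases (q.N w).mp h with h | h | h | h | h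
        · exact Or.inr (Or.inl ⟨h, v, hv, w, h, hvw⟩)
        · exact Or.inr (Or.inr (Or.inl ⟨h, v, hv, w, h, hvw⟩))
        · exact Or.inr (Or.inr (Or.inr (Or.inl h)))
        · exact Or.inr (Or.inr (Or.inr (Or.inr (Or.inl h))))
        · exact Or.inr (Or.inr (Or.inr (Or.inr (Or.inr ⟨h, v, hv, w, h, hvw⟩))))
    have up : ∀ x y : V, E G D {y} → E G D {x, y} := by
      rintro x y ⟨p, hp, r, hr, h⟩
      exact ⟨p, hp, r, Or.inr hr, h⟩
    have up' : ∀ x y : V, E G D {x} → E G D {x, y} := by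
      rintro x y ⟨p, hp, r, hr, h⟩
      exact ⟨p, hp, r, Or.inl hr, h⟩
    by_cases ha : E G D {a}
    · have hb : ¬ E G D {b} := fun h => q.one D hD hX' ha hc hd (up' _ _ h)
      have he : ¬ E G D {e} := fun h => q.one D hD hX' ha hc hd (up _ _ h)
      refine q.three D hX' hn a ua ?_
      intro v hv w hvw
      have := hmem v hv w hvw
      tauto
    · by_cases hb : E G D {b}
      · have he : ¬ E G D {e} := fun h => q.swap.one D hD hX' hb hc hd (up _ _ h)
        refine q.three D hX' hn b ub ?_
        intro v hv w hvw
        have := hmem v hv w hvw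
        tauto
      · refine q.three D hX' hn e ue ?_
        intro v hv w hvw
        have := hmem v hv w hvw
        tauto
  · push Not at hr
    have key : ∀ v w, G.Adj u v → G.Adj u w → v ≠ w → G.Adj v w := by
      intro v w uv uw hvw
      have hall := all_in (G := G) (v := v) (insert u ((nb G u).erase v)) (by
        have h5 := q.z.d5 uv.symm
        have hle : dg G u ≤ 5 := (dg_le (G := G) (v := u) {a, b, c, d, e} (by
          intro w hw
          have := (q.N w).mp hw
          simpa using this)).trans Finset.card_le_five
        have := Finset.card_insert_le u ((nb G u).erase v)
        have h2 : ((nb G u).erase v).card = dg G u - 1 := 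
          Finset.card_erase_of_mem (mem_nb.mpr uv)
        have := q.z.d5 uv
        omega) (by
        intro y hy
        by_cases h : y = u
        · simp [h]
        · have := hr v y uv hy h
          simp [mem_nb, this, hy.ne'])
      exact hall w (by simp [mem_nb, uw, hvw.symm])
    exact q.z.mn.nM (k6_0 (a := a) (b := b) (c := u) (d := c) (e := d) (f := e) q.ab ua.symm q.ac 
      q.ad q.ae ub.symm q.bc q.bd q.be uc ud ue q.cd (key c e uc ue q.ce) (key d e ud ue q.de))

end IcoMinor

namespace IcoMinor

set_option linter.unusedSectionVars false

open Finset

variable {V : Type*} [Fintype V]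

/-- the neighbourhood of `u` is `K_{2,3}` -/
structure ZK (G : SimpleGraph V) (u a b c d e : V) : Prop where
  z : Z G
  hu : dg G u = 5
  N : ∀ y, G.Adj u y ↔ y = a ∨ y = b ∨ y = c ∨ y = d ∨ y = e
  ab : a ≠ b
  cd : c ≠ d
  ce : c ≠ e
  de : d ≠ e
  ac : G.Adj a c
  ad : G.Adj a d
  ae : G.Adj a e
  bc : G.Adj b c
  bd : G.Adj b d
  be : G.Adj b e
  nab : ¬ G.Adj a b
  ncd : ¬ G.Adj c d
  nce : ¬ G.Adj c e
  nde : ¬ G.Adj d e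

theorem ZK.adj {G : SimpleGraph V} {u a b c d e : V} (q : ZK G u a b c d e) : 
    G.Adj u a ∧ G.Adj u b ∧ G.Adj u c ∧ G.Adj u d ∧ G.Adj u e :=
  ⟨(q.N a).mpr (by simp), (q.N b).mpr (by simp), (q.N c).mpr (by simp), (q.N d).mpr (by simp),
    (q.N e).mpr (by simp)⟩

theorem ZK.swap {G : SimpleGraph V} {u a b c d e : V} (q : ZK G u a b c d e) : 
    ZK G u b a c d e := by
  obtain ⟨z, hu, N, ab, cd, ce, de, ac, ad, ae, bc, bd, be, nab, ncd, nce, nde⟩ := q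
  exact ⟨z, hu, fun y => by rw [N, or_left_comm], ab.symm, cd, ce, de, bc, bd, be, ac, ad, ae, 
    fun h => nab h.symm, ncd, nce, nde⟩

theorem ZK.swap' {G : SimpleGraph V} {u a b c d e : V} (q : ZK G u a b c d e) : 
    ZK G u a b c e d := by
  obtain ⟨z, hu, N, ab, cd, ce, de, ac, ad, ae, bc, bd, be, nab, ncd, nce, nde⟩ := q
  exact ⟨z, hu, fun y => by rw [N, or_comm (a := y = d)], ab, ce, cd, de.symm, ac, ae, ad, bc, be, bd, 
    nab, nce, ncd, fun h => nde h.symm⟩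

theorem ZK.low {G : SimpleGraph V} {u a b c d e : V} (q : ZK G u a b c d e) : 
    dg G a = 5 := by
  obtain ⟨ua, ub, uc, ud, ue⟩ := q.adj
  obtain ⟨x, y, hxy, -, hx, hy, ux, uy, cx, cy⟩ := q.z.B q.hu uc
  have key : ∀ x, G.Adj u x → G.Adj c x → x = a ∨ x = b := by
    intro x hx hc
    rcases (q.N x).mp hx with h | h | h | h | h
    · exact Or.inl h
    · exact Or.inr h
    · exact absurd h.symm hc.ne
    · exact absurd (h ▸ hc) q.ncd
    · exact absurd (h ▸ hc) q.nce
  rcases key x ux cx with h | h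
  · rwa [← h]
  · rcases key y uy cy with h' | h'
    · rwa [← h']
    · exact absurd (h.trans h'.symm) hxy

theorem ZK.ex {G : SimpleGraph V} {u a b c d e : V} (q : ZK G u a b c d e) : 
    ∃ w, G.Adj a w ∧ G.Adj c w ∧ G.Adj d w ∧ G.Adj e w ∧ w ≠ u ∧ ¬ G.Adj u w ∧
      ∀ y, G.Adj a y ↔ y = u ∨ y = c ∨ y = d ∨ y = e ∨ y = w := by
  obtain ⟨ua, ub, uc, ud, ue⟩ := q.adj
  obtain ⟨w, aw, wu, wc, wd, we⟩ := out4 (G := G) q.low.ge u c d e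
  have N := full5 q.low.le ua.symm q.ac q.ad q.ae aw (by
    simp [uc.ne, ud.ne, ue.ne, q.cd, q.ce, q.de, wu.symm, wc.symm, wd.symm, we.symm])
  have key : ∀ x, G.Adj a x → ¬ G.Adj x c → ¬ G.Adj x d → ¬ G.Adj x e → G.Adj x w := by
    intro x ax xc xd xe
    obtain ⟨s, t, hst, -, -, -, as, at', xs, xt⟩ := q.z.B q.low ax
    have k : ∀ y, G.Adj a y → G.Adj x y → y = u ∨ y = w := by
      intro y ay xy
      rcases (N y).mp ay with h | h | h | h | h
      · exact Or.inl h
      · exact absurd (h ▸ xy) xc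
      · exact absurd (h ▸ xy) xd
      · exact absurd (h ▸ xy) xe
      · exact Or.inr h
    rcases k s as xs with h | h
    · rcases k t at' xt with h' | h'
      · exact absurd (h.trans h'.symm) hst
      · rwa [← h']
    · rwa [← h]
  refine ⟨w, aw, key c q.ac (fun h => h.ne rfl) q.ncd q.nce, 
    key d q.ad (fun h => q.ncd h.symm) (fun h => h.ne rfl) q.nde, 
    key e q.ae (fun h => q.nce h.symm) (fun h => q.nde h.symm) (fun h => h.ne rfl), wu, ?_, N⟩
  intro h
  rcases (q.N w).mp h with h | h | h | h | h
  · exact aw.ne h.symm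
  · exact q.nab (h ▸ aw)
  · exact wc h
  · exact wd h
  · exact we h

theorem ZK.one {G : SimpleGraph V} {u a b c d e w : V} (q : ZK G u a b c d e) (D : Set V)
    (hD : Cn G D) (hX : ∀ v ∈ D, v ≠ u ∧ ¬ G.Adj u v ∧ v ≠ w) (wu : w ≠ u) (uw : ¬ G.Adj u w)
    (aw : G.Adj a w) (bw : G.Adj b w) (cw : G.Adj c w) (dw : G.Adj d w) 
    (hc : ∃ r ∈ D, G.Adj c r) (hd : E G D {d}) : False := by
  obtain ⟨ua, ub, uc, ud, ue⟩ := q.adj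
  obtain ⟨r, hr, cr⟩ := hc
  obtain ⟨s, hs, d', hd', sd⟩ := hd
  have hd'' : d' = d := hd'
  subst hd''
  have nw : ∀ v, G.Adj u v → w ≠ v := fun v h h' => uw (h' ▸ h)
  refine q.z.mn.nM (k6_of (A := {u}) (B := {w}) (C := {b, e}) (D := {a}) (F := insert c D) (H := {d'})
    (cn_single G u) (cn_single G w) (cn_pair q.be) (cn_single G a) (cn_insert hD hr cr) 
    (cn_single G d') (sing_disj wu.symm) ?_ (sing_disj ua.ne) ?_ (sing_disj ud.ne) ?_ 
    (sing_disj (nw a ua)) ?_ (sing_disj (nw _ ud)) ?_ ?_ ?_ ?_ (sing_disj q.ad.ne) ?_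
    ⟨u, rfl, b, by simp, ub⟩ (sing_E ua) ⟨u, rfl, c, by simp, uc⟩ (sing_E ud)
    ⟨w, rfl, b, by simp, bw.symm⟩ (sing_E aw.symm) ⟨w, rfl, c, by simp, cw.symm⟩ (sing_E dw.symm) 
    ⟨e, by simp, a, rfl, q.ae.symm⟩ ⟨b, by simp, c, by simp, q.bc⟩ ⟨b, by simp, d', rfl, q.bd⟩
    ⟨a, rfl, c, by simp, q.ac⟩ (sing_E q.ad) ⟨s, Or.inr hs, d', rfl, sd⟩)
  · simp [ub.ne, ue.ne]
  · rw [Set.disjoint_singleton_left]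
    rintro (h | h)
    · exact uc.ne h
    · exact (hX _ h).1 rfl
  · simp [nw b ub, nw e ue]
  · rw [Set.disjoint_singleton_left]
    rintro (h | h)
    · exact cw.ne h.symm
    · exact (hX _ h).2.2 rfl
  · simp [q.ab, q.ae.ne]
  · rw [Set.disjoint_left]
    rintro v (rfl | rfl) (h | h)
    · exact q.bc.ne h
    · exact (hX _ h).2.1 ub
    · exact q.ce h.symm
    · exact (hX _ h).2.1 ue
  · simp [q.bd.ne', q.de]
  · rw [Set.disjoint_singleton_left]
    rintro (h | h)
    · exact q.ac.ne h
    · exact (hX _ h).2.1 ua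
  · rw [Set.disjoint_singleton_right]
    rintro (h | h)
    · exact q.cd h.symm
    · exact (hX _ h).2.1 ud

theorem ZK.false {G : SimpleGraph V} {u a b c d e : V} (q : ZK G u a b c d e) : False := by
  obtain ⟨ua, ub, uc, ud, ue⟩ := q.adj
  obtain ⟨w, aw, cw, dw, ew, wu, uw, Na⟩ := q.ex
  obtain ⟨w', bw, cw', dw', ew', wu', uw', Nb⟩ := q.swap.ex
  have nw : ∀ v, G.Adj u v → w ≠ v := fun v h h' => uw (h' ▸ h)
  have nw' : ∀ v, G.Adj u v → w' ≠ v := fun v h h' => uw' (h' ▸ h)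
  by_cases hw : w = w'
  · subst hw
    obtain ⟨r, cr, ru, ra, rb, rw'⟩ := out4 (G := G) (q.z.d5 cw) u a b w
    have ur : ¬ G.Adj u r := by
      intro h
      rcases (q.N r).mp h with h | h | h | h | h
      · exact ra h
      · exact rb h
      · exact cr.ne h.symm
      · exact q.ncd (h ▸ cr)
      · exact q.nce (h ▸ cr)
    obtain ⟨D, rD, hD, hX, hN⟩ := comp_ex G {y | y = u ∨ G.Adj u y ∨ y = w} r (by
      rintro (h | h | h)
      · exact ru h
      · exact ur h
      · exact rw' h)
    have hX' : ∀ v ∈ D, v ≠ u ∧ ¬ G.Adj u v ∧ v ≠ w := by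
      intro v hv
      have := hX v hv
      exact ⟨fun h => this (Or.inl h), fun h => this (Or.inr (Or.inl h)), 
        fun h => this (Or.inr (Or.inr h))⟩
    have hd : ¬ E G D {d} := fun h => q.one D hD hX' wu uw aw bw cw dw ⟨r, rD, cr⟩ h
    have he : ¬ E G D {e} := fun h => q.swap'.one D hD hX' wu uw aw bw cw ew ⟨r, rD, cr⟩ h
    refine q.z.mn.nM (cl3 q.z.mn.ih1 {a} D c w w (cn_single G a) (fun v _ w h => q.z.d5 h) 
      ⟨r, rD, c, cr.symm⟩ ?_ ?_ q.ac.ne' aw.ne' aw.ne' ?_ ?_ ?_ ⟨a, rfl, q.ac⟩ ⟨a, rfl, aw⟩ 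
      ⟨a, rfl, aw⟩ (Or.inl rfl))
    · intro v hv y hvy
      obtain ⟨v1, v2, v3⟩ := hX' v hv
      have hva : ∀ t, (∀ y, G.Adj t y ↔ y = u ∨ y = c ∨ y = d ∨ y = e ∨ y = w) → ¬ G.Adj t v := by
        intro t ht h
        rcases (ht v).mp h with h | h | h | h | h
        · exact v1 h
        · exact v2 (h ▸ uc)
        · exact v2 (h ▸ ud)
        · exact v2 (h ▸ ue)
        · exact v3 h
      rcases hN v hv y hvy with h | h | h | h
      · exact Or.inl h
      · exact absurd (h ▸ hvy.symm) v2
      · rcases (q.N y).mp h with h | h | h | h | h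
        · exact absurd (h ▸ hvy.symm) (hva a Na)
        · exact absurd (h ▸ hvy.symm) (hva b Nb)
        · exact Or.inr (Or.inl h)
        · exact absurd ⟨v, hv, y, h, hvy⟩ hd
        · exact absurd ⟨v, hv, y, h, hvy⟩ he
      · exact Or.inr (Or.inr (Or.inl h))
    · rintro v hv rfl
      exact (hX' _ hv).2.1 ua
    · exact fun h => (hX' _ h).2.1 uc
    · exact fun h => (hX' _ h).2.2 rfl
    · exact fun h => (hX' _ h).2.2 rfl
  · refine q.z.mn.nM (k6_of (A := {a}) (B := {b}) (C := {c, w}) (D := {d, w'}) (F := {e}) (H := {u})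
      (cn_single G a) (cn_single G b) (cn_pair cw) (cn_pair dw') (cn_single G e) (cn_single G u)
      (sing_disj q.ab) ?_ ?_ (sing_disj q.ae.ne) (sing_disj ua.ne') ?_ ?_ (sing_disj q.be.ne) 
      (sing_disj ub.ne') ?_ ?_ ?_ ?_ ?_ (sing_disj ue.ne') 
      ⟨a, rfl, c, by simp, q.ac⟩ ⟨a, rfl, d, by simp, q.ad⟩ (sing_E q.ae) (sing_E ua.symm)
      ⟨b, rfl, c, by simp, q.bc⟩ ⟨b, rfl, d, by simp, q.bd⟩ (sing_E q.be) (sing_E ub.symm)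
      ⟨c, by simp, w', by simp, cw'⟩ ⟨w, by simp, e, rfl, ew.symm⟩ ⟨c, by simp, u, rfl, uc.symm⟩
      ⟨w', by simp, e, rfl, ew'.symm⟩ ⟨d, by simp, u, rfl, ud.symm⟩ (sing_E ue.symm))
    · simp [q.ac.ne, aw.ne]
    · simp [q.ad.ne, (nw' a ua).symm]
    · simp [q.bc.ne, (nw b ub).symm]
    · simp [q.bd.ne, bw.ne]
    · rw [Set.disjoint_left]
      rintro v (rfl | rfl) (h | h)
      · exact q.cd h
      · exact cw'.ne h
      · exact dw.ne h.symm
      · exact hw h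
    · simp [q.ce.symm, ew.ne]
    · simp [uc.ne, wu.symm]
    · simp [q.de.symm, ew'.ne]
    · simp [ud.ne, wu'.symm]

theorem Z.two {G : SimpleGraph V} (z : Z G) {u h x y t : V} (hu : dg G u = 5) (uh : G.Adj u h)
    (ux : G.Adj u x) (uy : G.Adj u y) (ut : G.Adj u t) (hx : G.Adj h x) (hy : G.Adj h y)
    (ht : G.Adj h t) (xy : x ≠ y) (xt : x ≠ t) (yt : y ≠ t) : False := by
  obtain ⟨w, uw, wh, wx, wy, wt⟩ := out4 (G := G) hu.ge h x y t
  have N := full5 hu.le uh ux uy ut uw (by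
    simp [hx.ne, hy.ne, ht.ne, xy, xt, yt, wh.symm, wx.symm, wy.symm, wt.symm])
  by_cases hall : G.Adj w x ∧ G.Adj w y ∧ G.Adj w t
  · obtain ⟨w1, w2, w3⟩ := hall
    have nxy : ¬ G.Adj x y := fun hxy => ZQ.false (u := u) (a := h) (b := w) (c := x) (d := y) (e := t)
      ⟨z, fun v => by rw [N]; clear * -; tauto, wh.symm, hx, hy, ht, w1, w2, w3, hxy, xt, yt⟩
    have nxt : ¬ G.Adj x t := fun hxy => ZQ.false (u := u) (a := h) (b := w) (c := x) (d := t) (e := y)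
      ⟨z, fun v => by rw [N]; clear * -; tauto, wh.symm, hx, ht, hy, w1, w3, w2, hxy, xy, yt.symm⟩
    have nyt : ¬ G.Adj y t := fun hxy => ZQ.false (u := u) (a := h) (b := w) (c := y) (d := t) (e := x)
      ⟨z, fun v => by rw [N]; clear * -; tauto, wh.symm, hy, ht, hx, w2, w3, w1, hxy, xy.symm, xt.symm⟩
    by_cases hw : G.Adj h w
    · obtain ⟨a, b, hab, nab, -, -, ua, ub, xa, xb⟩ := z.B hu ux
      have key : ∀ v, G.Adj u v → G.Adj x v → v = h ∨ v = w := by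
        intro v uv xv
        rcases (N v).mp uv with h | h | h | h | h
        · exact Or.inl h
        · exact absurd h.symm xv.ne
        · exact absurd (h ▸ xv) nxy
        · exact absurd (h ▸ xv) nxt
        · exact Or.inr h
      rcases key a ua xa with rfl | rfl <;> rcases key b ub xb with rfl | rfl
      · exact hab rfl
      · exact nab hw
      · exact nab hw.symm
      · exact hab rfl
    · exact ZK.false (u := u) (a := h) (b := w) (c := x) (d := y) (e := t)
        ⟨z, hu, fun v => by rw [N]; clear * -; tauto, wh.symm, xy, xt, yt, hx, hy, ht, w1, w2, w3, hw, 
          nxy, nxt, nyt⟩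
  · skip
    have main : ∀ x y t, (∀ v, G.Adj u v ↔ v = h ∨ v = x ∨ v = y ∨ v = t ∨ v = w) → 
        G.Adj h x → G.Adj h y → G.Adj h t → x ≠ y → x ≠ t → y ≠ t → x ≠ w → y ≠ w → t ≠ w → 
        ¬ G.Adj w t → False := by
      clear hall N ht hy hx ut uy ux xy xt yt wx wy wt x y t
      intro x y t N hx hy ht xy xt yt xw yw tw nwt
      have ux : G.Adj u x := (N x).mpr (by simp)
      have uy : G.Adj u y := (N y).mpr (by simp)
      have ut : G.Adj u t := (N t).mpr (by simp)
      have kt : ∀ v, G.Adj u v → G.Adj t v → v = h ∨ v = x ∨ v = y := by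
        intro v uv tv
        rcases (N v).mp uv with h | h | h | h | h
        · exact Or.inl h
        · exact Or.inr (Or.inl h)
        · exact Or.inr (Or.inr h)
        · exact absurd h.symm tv.ne
        · exact absurd (h ▸ tv.symm) nwt
      have kw : ∀ v, G.Adj u v → G.Adj w v → v = h ∨ v = x ∨ v = y := by
        intro v uv tv
        rcases (N v).mp uv with h | h | h | h | h
        · exact Or.inl h
        · exact Or.inr (Or.inl h)
        · exact Or.inr (Or.inr h)
        · exact absurd (h ▸ tv) nwt
        · exact absurd h.symm tv.ne
      have fin : ∀ s, G.Adj u s → (∀ v, G.Adj u v → G.Adj s v → v = h ∨ v = x ∨ v = y) → 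
          G.Adj s x ∧ G.Adj s y ∧ ¬ G.Adj x y := by
        intro s us ks
        obtain ⟨a, b, hab, nab, -, -, ua, ub, sa, sb⟩ := z.B hu us
        rcases ks a ua sa with rfl | rfl | rfl <;> rcases ks b ub sb with rfl | rfl | rfl
        · exact absurd rfl hab
        · exact absurd hx nab
        · exact absurd hy nab
        · exact absurd hx.symm nab
        · exact absurd rfl hab
        · exact ⟨sa, sb, nab⟩
        · exact absurd hy.symm nab
        · exact ⟨sb, sa, fun h => nab h.symm⟩
        · exact absurd rfl hab
      obtain ⟨t1, t2, nxy⟩ := fin t ut kt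
      obtain ⟨w1, w2, -⟩ := fin w uw kw
      exact ZQ.false (u := u) (a := x) (b := y) (c := h) (d := t) (e := w)
        ⟨z, fun v => by rw [N]; clear * -; tauto, xy, hx.symm, t1.symm, w1.symm, hy.symm, t2.symm, 
          w2.symm, ht, wh.symm, tw⟩
    by_cases w3 : G.Adj w t
    · by_cases w2 : G.Adj w y
      · have w1 : ¬ G.Adj w x := fun w1 => hall ⟨w1, w2, w3⟩
        exact main y t x (fun v => by rw [N]; clear * -; tauto) hy ht hx yt xy.symm xt.symm wy.symm
          wt.symm wx.symm w1
      · exact main x t y (fun v => by rw [N]; clear * -; tauto) hx ht hy xt xy yt.symm wx.symm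
          wt.symm wy.symm w2
    · exact main x y t N hx hy ht xy xt yt wx.symm wy.symm wt.symm w3

end IcoMinor

namespace IcoMinor

set_option linter.unusedSectionVars false

open Finset

variable {V : Type*} [Fintype V]

theorem Z.nxt {G : SimpleGraph V} (z : Z G) {u v h : V} (hu : dg G u = 5) (uv : G.Adj u v)
    (uh : G.Adj u h) (vh : G.Adj v h) : dg G h = 5 ∧ ∃ r, G.Adj u r ∧ G.Adj v r ∧ r ≠ h ∧ 
      ¬ G.Adj h r ∧ dg G r = 5 ∧ ∀ y, G.Adj u y → G.Adj v y → y = h ∨ y = r := by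
  obtain ⟨a, b, hab, nab, da, db, ua, ub, va, vb⟩ := z.B hu uv
  have key : ∀ y, G.Adj u y → G.Adj v y → y = a ∨ y = b := by
    intro y uy vy
    by_contra hcon
    rw [not_or] at hcon
    exact z.two hu uv ua ub uy va vb vy hab (Ne.symm hcon.1) (Ne.symm hcon.2)
  rcases key h uh vh with rfl | rfl
  · exact ⟨da, b, ub, vb, hab.symm, nab, db, key⟩
  · exact ⟨db, a, ua, va, hab, fun h => nab h.symm, da, fun y h1 h2 => (key y h1 h2).symm⟩

structure C5 (G : SimpleGraph V) (u h p r s q : V) : Prop where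
  N : ∀ y, G.Adj u y ↔ y = h ∨ y = p ∨ y = r ∨ y = s ∨ y = q
  hp : G.Adj h p
  pr : G.Adj p r
  rs : G.Adj r s
  sq : G.Adj s q
  qh : G.Adj q h
  hr : h ≠ r
  hs : h ≠ s
  ps : p ≠ s
  pq : p ≠ q
  rq : r ≠ q
  nhr : ¬ G.Adj h r
  nhs : ¬ G.Adj h s
  nps : ¬ G.Adj p s
  npq : ¬ G.Adj p q
  nrq : ¬ G.Adj r q
  dh : dg G h = 5
  dp : dg G p = 5
  dr : dg G r = 5
  ds : dg G s = 5
  dq : dg G q = 5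

theorem Z.c5 {G : SimpleGraph V} (z : Z G) {u h p q : V} (hu : dg G u = 5) (uh : G.Adj u h)
    (up : G.Adj u p) (uq : G.Adj u q) (hp : G.Adj h p) (hq : G.Adj h q) (pq : p ≠ q) :
    ∃ r s, C5 G u h p r s q := by
  obtain ⟨dp, q', uq', hq', qp', npq', dq', Kh⟩ := z.nxt hu uh up hp
  have hqq : q = q' := (Kh q uq hq).resolve_left pq.symm
  subst hqq
  obtain ⟨dh, r, ur, pr, rh, nhr, dr, Kp⟩ := z.nxt hu up uh hp.symm
  obtain ⟨-, s, us, qs, sh, nhs, ds, Kq⟩ := z.nxt hu uq uh hq.symm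
  have rq : r ≠ q := fun h => nhr (h ▸ hq)
  have sp : s ≠ p := fun h => nhs (h ▸ hp)
  have rs : r ≠ s := by
    intro h
    subst h
    obtain ⟨w, uw, wh, wp, wq, wr⟩ := out4 (G := G) hu.ge h p q r
    have N := full5 hu.le uh up uq ur uw (by
      simp [hp.ne, hq.ne, rh.symm, wh.symm, pq, pr.ne, wp.symm, qs.ne, wq.symm, wr.symm])
    obtain ⟨a, b, hab, -, -, -, ua, ub, wa, wb⟩ := z.B hu uw
    have key : ∀ y, G.Adj u y → G.Adj w y → y = r := by
      intro y uy wy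
      rcases (N y).mp uy with e | e | e | e | e
      · subst e
        rcases Kh w uw wy.symm with e | e
        · exact absurd e wp
        · exact absurd e wq
      · subst e
        rcases Kp w uw wy.symm with e | e
        · exact absurd e wh
        · exact absurd e wr
      · subst e
        rcases Kq w uw wy.symm with e | e
        · exact absurd e wh
        · exact absurd e wr
      · exact e
      · exact absurd e.symm wy.ne
    exact hab ((key a ua wa).trans (key b ub wb).symm)
  have N := full5 hu.le uh up ur us uq (by
    simp [hp.ne, hq.ne, rh.symm, sh.symm, pq, pr.ne, sp.symm, qs.ne', rs, rq])
  have nps : ¬ G.Adj p s := by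
    intro h
    rcases Kp s us h with e | e
    · exact sh e
    · exact rs e.symm
  have nrq : ¬ G.Adj r q := by
    intro h
    rcases Kq r ur h.symm with e | e
    · exact rh e
    · exact rs e
  have hrs : G.Adj r s := by
    obtain ⟨-, t, ut, rt, tp, npt, -, -⟩ := z.nxt hu ur up pr.symm
    rcases (N t).mp ut with e | e | e | e | e
    · exact absurd (e ▸ rt.symm) nhr
    · exact absurd e tp
    · exact absurd e.symm rt.ne
    · exact e ▸ rt
    · exact absurd (e ▸ rt) nrq
  exact ⟨r, s, N, hp, pr, hrs, qs.symm, hq.symm, rh.symm, sh.symm, sp.symm, pq, rq, nhr, nhs, nps,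
    npq', nrq, dh, dp, dr, ds, dq'⟩

theorem i5 (i j : Fin 5) : j = i ∨ j = i + 1 ∨ j = i + 2 ∨ j = i + 3 ∨ j = i + 4 := by
  revert i j
  decide

theorem case0 {G : SimpleGraph V} (z : Z G) : False := by
  obtain ⟨u, hu⟩ := z.low_ex
  obtain ⟨h, uh⟩ := dg_pos (G := G) (v := u) (by omega)
  obtain ⟨p, q, pq, -, -, -, up, uq, hp, hq⟩ := z.B hu uh
  obtain ⟨r, s, C⟩ := z.c5 hu uh up uq hp hq pq
  have i14 : ∀ i : Fin 5, i + 1 + 4 = i := by decide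
  have i41 : ∀ i : Fin 5, i + 4 + 1 = i := by decide
  have i42 : ∀ i : Fin 5, i + 4 + 2 = i + 1 := by decide
  obtain ⟨b, ub, bb, bb2, bb2n, db⟩ : ∃ b : Fin 5 → V, (∀ i, G.Adj u (b i)) ∧ 
      (∀ i, G.Adj (b i) (b (i + 1))) ∧ (∀ i, ¬ G.Adj (b i) (b (i + 2))) ∧ 
      (∀ i, b i ≠ b (i + 2)) ∧ ∀ i, dg G (b i) = 5 := by
    refine ⟨![h, p, r, s, q], ?_, ?_, ?_, ?_, ?_⟩
    · intro i
      rw [C.N]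
      fin_cases i <;> simp
    · intro i
      fin_cases i
      exacts [C.hp, C.pr, C.rs, C.sq, C.qh]
    · intro i
      fin_cases i
      exacts [C.nhr, C.nps, C.nrq, fun h => C.nhs h.symm, fun h => C.npq h.symm]
    · intro i
      fin_cases i
      exacts [C.hr, C.ps, C.rq, C.hs.symm, C.pq.symm]
    · intro i
      fin_cases i
      exacts [C.dh, C.dp, C.dr, C.ds, C.dq]
  clear C hp hq pq up uq uh
  have binj : Function.Injective b := by
    intro i j hij
    have e1 : ∀ k : Fin 5, k + 3 + 2 = k := by decide
    rcases i5 i j with e | e | e | e | e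
    · exact e.symm
    · exact absurd (e ▸ hij) (bb i).ne
    · exact absurd (e ▸ hij) (bb2n i)
    · have := bb2n (i + 3)
      rw [e1] at this
      exact absurd (e ▸ hij).symm this
    · have := (bb (i + 4)).ne
      rw [i41] at this
      exact absurd (e ▸ hij).symm this
  have hc5 : ∀ i, ∃ r s, C5 G (b i) u (b (i + 4)) r s (b (i + 1)) := by
    intro i
    have h4 := bb (i + 4)
    rw [i41] at h4
    have h2 := bb2n (i + 4)
    rw [i42] at h2
    exact z.c5 (db i) (ub i).symm h4.symm (bb i) (ub _) (ub _) h2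
  choose c s hc using hc5
  have hs : ∀ i, s i = c (i + 1) := by
    intro i
    have h1 := hc (i + 1)
    have hadj := h1.pr
    rw [i14] at hadj
    have hadj2 : G.Adj (b (i + 1)) (c (i + 1)) := (h1.N _).mpr (by simp)
    rcases ((hc i).N _).mp hadj with e | e | e | e | e
    · exact absurd e.symm h1.hr
    · have h2 := bb2 (i + 4)
      rw [i42] at h2
      exact absurd (e ▸ hadj2.symm) h2
    · exact absurd (e ▸ hadj2.symm) (hc i).nrq
    · exact e.symm
    · exact absurd e.symm hadj2.ne
  have bc : ∀ i, G.Adj (b i) (c i) := fun i => ((hc i).N _).mpr (by simp)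
  have bc1 : ∀ i, G.Adj (b i) (c (i + 1)) := by
    intro i
    rw [← hs]
    exact ((hc i).N _).mpr (by simp)
  have cc : ∀ i, G.Adj (c i) (c (i + 1)) := by
    intro i
    rw [← hs]
    exact (hc i).rs
  have uc : ∀ i, ¬ G.Adj u (c i) := fun i => (hc i).nhr
  have unc : ∀ i, u ≠ c i := fun i => (hc i).hr
  have ncb1 : ∀ i, ¬ G.Adj (c i) (b (i + 1)) := fun i => (hc i).nrq
  have nbc4 : ∀ i, ¬ G.Adj (b (i + 4)) (c (i + 1)) := by
    intro i
    have := (hc i).nps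
    rwa [hs] at this
  have bnc : ∀ i j, b i ≠ c j := fun i j e => uc j (e ▸ ub i)
  have cinj : Function.Injective c := by
    intro i j hij
    have e1 : ∀ k : Fin 5, k + 1 + 1 = k + 2 := by decide
    have e3 : ∀ k : Fin 5, k + 4 + 4 = k + 3 := by decide
    have e4 : ∀ k : Fin 5, k + 3 + 1 = k + 4 := by decide
    have hb3 : ¬ G.Adj (b (i + 3)) (c i) := by
      have := nbc4 (i + 4)
      rwa [e3, i41] at this
    rcases i5 i j with e | e | e | e | e
    · exact e.symm
    · have := (bc j).symm
      rw [← hij, e] at this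
      exact absurd this (ncb1 i)
    · have := (bc1 (i + 1)).symm
      rw [e1, ← e, ← hij] at this
      exact absurd this (ncb1 i)
    · have := bc j
      rw [← hij, e] at this
      exact absurd this hb3
    · have := bc1 (i + 3)
      rw [e4, ← e, ← hij] at this
      exact absurd this hb3
  have hd5 : ∀ i, ∃ r s, C5 G (c i) (b i) (b (i + 4)) r s (c (i + 1)) := by
    intro i
    have h4 := bb (i + 4)
    rw [i41] at h4
    have h5 := bc1 (i + 4)
    rw [i41] at h5
    exact z.c5 (hc i).dr (bc i).symm h5.symm (cc i) h4.symm (bc1 i) (bnc _ _)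
  choose r t hd using hd5
  have hr : ∀ i, r i = c (i + 4) := by
    intro i
    have hadj := (cc (i + 4)).symm
    rw [i41] at hadj
    rcases ((hd i).N _).mp hadj with e | e | e | e | e
    · exact absurd e.symm (bnc _ _)
    · exact absurd e.symm (bnc _ _)
    · exact e.symm
    · exact absurd (e ▸ bc (i + 4)) (hd i).nps
    · have := cinj e
      exact absurd this (by clear * -; revert i; decide)
  have ht : ∀ i, t (i + 1) = t i := by
    intro i
    have h1 := hd (i + 1)
    have a1 : G.Adj (c (i + 1)) (t (i + 1)) := (h1.N _).mpr (by simp)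
    have a2 : G.Adj (c i) (t (i + 1)) := by
      have := h1.rs
      rwa [hr, i14] at this
    rcases ((hd i).N _).mp a2 with e | e | e | e | e
    · have := h1.ps
      rw [i14] at this
      exact absurd e.symm this
    · exact absurd (e ▸ a1.symm) (nbc4 i)
    · exact absurd (e ▸ a1.symm) (hd i).nrq
    · exact e
    · exact absurd e.symm a1.ne
  have ht0 : ∀ i, t i = t 0 := by
    have h1 := ht 0
    have h2 := ht 1
    have h3 := ht 2
    have h4 := ht 3
    intro i
    fin_cases i
    · rfl
    · exact h1
    · exact h2.trans h1
    · exact h3.trans (h2.trans h1)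
    · exact h4.trans (h3.trans (h2.trans h1))
  have tc : ∀ i, G.Adj (t 0) (c i) := by
    intro i
    rw [← ht0 i]
    exact (((hd i).N _).mpr (by simp)).symm
  refine z.mn.nM (ico_of u (t 0) b c binj cinj ub bb bc bc1 cc tc unc ?_ bnc ?_)
  · intro e
    exact uc 0 (e ▸ tc 0)
  · intro i
    rw [← ht0 i]
    exact (hd i).hs

theorem rep_drop {G : SimpleGraph V} {K : Finset V} (hR : Rep G K) (t : V) (K' : Finset V)
    (hK : ∀ v ∈ K, v = t ∨ v ∈ K') (hs : ∀ v ∈ K', v ∈ K)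
    (ht : ∀ w, G.Adj t w → 5 ≤ dg G t) : Rep G K' := by
  refine ⟨?_, ?_⟩
  · intro v hv w hvw
    by_cases h : v ∈ K
    · have h2 : v = t := (hK v h).resolve_right hv
      subst h2
      exact ht w hvw
    · exact hR.1 v h w hvw
  · obtain ⟨v, hv, h⟩ := hR.2
    exact ⟨v, fun h' => hv (hs v h'), h⟩

theorem main1 {G : SimpleGraph V} (mn : Mn G) {x : V} (hR : Rep G {x}) : False := by
  by_cases h : (∃ w, G.Adj x w) ∧ dg G x ≤ 4
  · exact case1 mn hR h.1 h.2
  · refine case0 ⟨mn, rep_drop hR x ∅ (by simp) (by simp) ?_⟩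
    intro w hw
    by_contra hc
    exact h ⟨⟨w, hw⟩, by omega⟩

theorem main2 {G : SimpleGraph V} (mn : Mn G) {x y : V} (hR : Rep G {x, y}) (h : G.Adj x y) : 
    False := by
  by_cases hx : dg G x ≤ 4
  · by_cases hy : dg G y ≤ 4
    · exact case2 mn hR h hx hy
    · exact main1 mn (rep_drop hR y {x} (by simp) (by simp) (fun w _ => by omega))
  · exact main1 mn (rep_drop hR x {y} (by simp) (by simp) (fun w _ => by omega))

theorem main3 {G : SimpleGraph V} (mn : Mn G) {x y t : V} (hR : Rep G {x, y, t}) (h1 : G.Adj x y) 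
    (h2 : G.Adj x t) (h3 : G.Adj y t) : False := by
  by_cases hx : dg G x ≤ 4
  · by_cases hy : dg G y ≤ 4
    · by_cases ht : dg G t ≤ 4
      · exact TC.false ⟨mn, h1, h2, h3, hR, hx, hy, ht⟩
      · exact main2 mn (rep_drop hR t {x, y} (by simp) (by simp) (fun w _ => by omega)) h1
    · exact main2 mn (rep_drop hR y {x, t} (by simp) (by simp) (fun w _ => by omega)) h2
  · exact main2 mn (rep_drop hR x {y, t} (by simp) (by simp) (fun w _ => by omega)) h3

theorem main_step (G : SimpleGraph V) (hC : InC G) (mn : Mn G) : False := by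
  obtain ⟨K, hT, hR⟩ := hC
  rcases hT with ⟨hK, hc⟩ | ⟨x, t1, t2, t3, t4, rfl, hr⟩
  · have : K.card = 0 ∨ K.card = 1 ∨ K.card = 2 ∨ K.card = 3 := by omega
    rcases this with h | h | h | h
    · rw [Finset.card_eq_zero] at h
      subst h
      exact case0 ⟨mn, hR⟩
    · obtain ⟨x, rfl⟩ := Finset.card_eq_one.mp h
      exact main1 mn hR
    · obtain ⟨x, y, hxy, rfl⟩ := Finset.card_eq_two.mp h
      exact main2 mn hR (hc x (by simp) y (by simp) hxy)
    · obtain ⟨x, y, t, h1, h2, h3, rfl⟩ := Finset.card_eq_three.mp h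
      exact main3 mn hR (hc x (by simp) y (by simp) h1) (hc x (by simp) t (by simp) h2)
        (hc y (by simp) t (by simp) h3)
  · exact RC.false ⟨mn, hr, hR⟩

theorem main_thm {V : Type*} [Fintype V] (G : SimpleGraph V) (hdeg : 5 ≤ G.minDegree) : M G := by
  have hd : ∀ v, 5 ≤ dg G v := by
    intro v
    refine hdeg.trans ((G.minDegree_le_degree v).trans (le_of_eq ?_))
    unfold dg
    rw [← SimpleGraph.card_neighborFinset_eq_degree]
    congr 1
    ext y
    rw [mem_nb]
    simp
  have hne : Nonempty V := by
    by_contra h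
    rw [not_nonempty_iff] at h
    rw [SimpleGraph.minDegree_of_subsingleton] at hdeg
    omega
  obtain ⟨v⟩ := hne
  obtain ⟨w, hw⟩ := dg_pos (G := G) (v := v) (by have := hd v; omega)
  exact induct main_step G ⟨∅, Or.inl ⟨by simp, by simp⟩, fun v _ _ _ => hd v, v, by simp, w, hw⟩

end IcoMinor

theorem minDegree5_K6minus_or_icosahedron_minor {V : Type*} [Fintype V] (G : SimpleGraph V)
    (hdeg : 5 ≤ G.minDegree) :
    G.HasMinor K6minus ∨ G.HasMinor Icosa :=
  IcoMinor.main_thm G hdeg
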